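/- arXiv:math/0503747 — 2 statements merged into one kernel-verified Lean document; each statement's English description precedes it below -/
import Mathlib

section
/- Let M be a properly infinite von Neumann algebra and let q, r be projections in M such that zq ≺ zr (strict subequivalence) for every nonzero central projection z. Then q⊥ = 1 − q is equivalent to 1. -/
open ContinuousLinearMap Filter Topology

universe u

noncomputable section

variable {H : Type u} [NormedAddCommGroup H] [InnerProductSpace ℂ H] [CompleteSpace H]

/-- `p` is an (orthogonal) projection belonging to the von Neumann algebra `M`. -/
def IsProjIn (M : VonNeumannAlgebra H) (p : H →L[ℂ] H) : Prop :=
  p ∈ M ∧ IsSelfAdjoint p ∧ p * p = p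

/-- Murray–von Neumann equivalence of `p` and `q` relative to `M`:
there is a partial isometry `v ∈ M` with `v* v = p` and `v v* = q`. -/
def MvNEquiv (M : VonNeumannAlgebra H) (p q : H →L[ℂ] H) : Prop :=
  ∃ v ∈ M, adjoint v * v = p ∧ v * adjoint v = q

/-- The order on projections: `p ≤ q` iff `p q = p = q p`. -/
def ProjLE (p q : H →L[ℂ] H) : Prop := p * q = p ∧ q * p = p

/-- Murray–von Neumann subequivalence `p ≼ q`: `p` is equivalent to a subprojection of `q`. -/
def SubEquiv (M : VonNeumannAlgebra H) (p q : H →L[ℂ] H) : Prop :=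
  ∃ r, IsProjIn M r ∧ MvNEquiv M p r ∧ ProjLE r q

/-- `z` is a central projection of `M`. -/
def IsCentralProj (M : VonNeumannAlgebra H) (z : H →L[ℂ] H) : Prop :=
  IsProjIn M z ∧ ∀ x ∈ M, z * x = x * z

/-- A projection `p` is finite: `p ∼ q ≤ p` implies `q = p`. -/
def FiniteProj (M : VonNeumannAlgebra H) (p : H →L[ℂ] H) : Prop :=
  ∀ q, IsProjIn M q → ProjLE q p → MvNEquiv M p q → q = p

/-- A projection `p` is properly infinite: it is a countably infinite sum of pairwise
orthogonal projections, each equivalent to `p`. -/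
def ProperlyInfiniteProj (M : VonNeumannAlgebra H) (p : H →L[ℂ] H) : Prop :=
  p ≠ 0 ∧ ∃ e : ℕ → H →L[ℂ] H, (∀ n, IsProjIn M (e n)) ∧
    (Pairwise fun m n => e m * e n = 0) ∧ (∀ n, MvNEquiv M (e n) p) ∧
    ∀ ξ : H, HasSum (fun n => e n ξ) (p ξ)

/-- `z` is the central support of `h`: the smallest central projection with `z h = h`. -/
def IsCentralSupport (M : VonNeumannAlgebra H) (h z : H →L[ℂ] H) : Prop :=
  IsCentralProj M z ∧ z * h = h ∧ ∀ w, IsCentralProj M w → w * h = h → z * w = z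

/-- The projection `e` is σ-finite relative to `M`: every family of pairwise orthogonal
nonzero subprojections of `e` in `M` is countable. -/
def SigmaFiniteProj (M : VonNeumannAlgebra H) (e : H →L[ℂ] H) : Prop :=
  ∀ S : Set (H →L[ℂ] H), (∀ q ∈ S, IsProjIn M q ∧ q ≠ 0 ∧ ProjLE q e) →
    (S.Pairwise fun a b => a * b = 0) → S.Countable

/-- Kadison–Pedersen equivalence on the positive cone: `h ≈ k` iff there is a family
`{x_α} ⊆ M` with `h = Σ x_α* x_α` and `k = Σ x_α x_α*` (sums in the strong topology). -/
def KPEquiv (M : VonNeumannAlgebra H) (h k : H →L[ℂ] H) : Prop :=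
  ∃ (ι : Type u) (x : ι → H →L[ℂ] H), (∀ i, x i ∈ M) ∧
    (∀ ξ : H, HasSum (fun i => (adjoint (x i) * x i) ξ) (h ξ)) ∧
    (∀ ξ : H, HasSum (fun i => (x i * adjoint (x i)) ξ) (k ξ))

/-- Operator order: `a ≤ b` iff `b - a` is positive. -/
def OpLE (a b : H →L[ℂ] H) : Prop := (b - a).IsPositive

/-- `h ∈ M₊` is finite in the Kadison–Pedersen sense: `h ≈ k ≤ h` implies `k = h`. -/
def KPFinite (M : VonNeumannAlgebra H) (h : H →L[ℂ] H) : Prop :=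
  ∀ k, k ∈ M → k.IsPositive → OpLE k h → KPEquiv M h k → k = h

/-- `h ∈ M₊` is properly infinite: `z h` is finite and nonzero for no central projection `z`. -/
def KPProperlyInfinite (M : VonNeumannAlgebra H) (h : H →L[ℂ] H) : Prop :=
  h ≠ 0 ∧ ∀ z, IsCentralProj M z → KPFinite M (z * h) → z * h = 0

/-- The set of projections of `M`. -/
def ProjSet (M : VonNeumannAlgebra H) := {p : H →L[ℂ] H // IsProjIn M p}

/-- The strong operator topology on the projections of `M` (topology of pointwise convergence). -/
instance (M : VonNeumannAlgebra H) : TopologicalSpace (ProjSet M) :=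
  TopologicalSpace.induced (fun p : ProjSet M => (fun ξ => p.1 ξ : H → H)) inferInstance

/-- The quotient `P(M)/∼` of the projections of `M` by Murray–von Neumann equivalence,
carrying the quotient (strong operator) topology. -/
abbrev PQuot (M : VonNeumannAlgebra H) :=
  Quot (fun p q : ProjSet M => MvNEquiv M p.1 q.1)

/-- The quotient map `P(M) → P(M)/∼`. -/
def pquotMk (M : VonNeumannAlgebra H) : ProjSet M → PQuot M := Quot.mk _

/-- The strong operator topology on `B(H)`. -/
def SOT : TopologicalSpace (H →L[ℂ] H) :=
  TopologicalSpace.induced (fun a : H →L[ℂ] H => (fun ξ => a ξ : H → H)) inferInstance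

/-- The order induced on `P(M)/∼` by Murray–von Neumann subequivalence. -/
def QLE (M : VonNeumannAlgebra H) (a b : PQuot M) : Prop :=
  ∃ p q : ProjSet M, a = pquotMk M p ∧ b = pquotMk M q ∧ SubEquiv M p.1 q.1

theorem aux_proj_mem (M : VonNeumannAlgebra H) (K : Submodule ℂ H) [K.HasOrthogonalProjection]
    (hK : ∀ y ∈ M.commutant, ∀ ξ ∈ K, y ξ ∈ K) : K.starProjection ∈ M := by
  rw [VonNeumannAlgebra.IsStarProjection.mem_iff isStarProjection_starProjection]
  intro y hy
  rw [Submodule.range_starProjection, Module.End.mem_invtSubmodule]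
  intro ξ hξ
  exact hK y hy ξ hξ

theorem aux_projIn (M : VonNeumannAlgebra H) (K : Submodule ℂ H) [K.HasOrthogonalProjection]
    (hK : ∀ y ∈ M.commutant, ∀ ξ ∈ K, y ξ ∈ K) : IsProjIn M K.starProjection :=
  ⟨aux_proj_mem M K hK, isStarProjection_starProjection.isSelfAdjoint,
    isStarProjection_starProjection.isIdempotentElem⟩

theorem aux_comm {M : VonNeumannAlgebra H} {x y : H →L[ℂ] H} (hx : x ∈ M)
    (hy : y ∈ M.commutant) : x * y = y * x :=
  VonNeumannAlgebra.mem_commutant_iff.1 hy x hx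

theorem aux_mem {M : VonNeumannAlgebra H} {x : H →L[ℂ] H}
    (h : ∀ y ∈ M.commutant, y * x = x * y) : x ∈ M := by
  rw [← M.commutant_commutant]
  exact VonNeumannAlgebra.mem_commutant_iff.2 h

theorem aux_isom (x s : H →L[ℂ] H) (h : star s * s = star x * x) (ξ : H) : ‖x ξ‖ = ‖s ξ‖ := by
  have key : ∀ t : H →L[ℂ] H, ‖t ξ‖ ^ 2 = RCLike.re (inner ℂ ((star t * t) ξ) ξ) := by
    intro t
    rw [star_eq_adjoint, mul_apply_eq_comp, ContinuousLinearMap.adjoint_inner_left]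
    exact (inner_self_eq_norm_sq (𝕜 := ℂ) (t ξ)).symm
  have := (key x).trans ((by rw [h] : _ = _).trans (key s).symm)
  exact (sq_eq_sq₀ (norm_nonneg _) (norm_nonneg _)).1 this

theorem aux_polar (M : VonNeumannAlgebra H) (x : H →L[ℂ] H) (hx : x ∈ M) :
    ∃ u ∈ M, u * star u * u = u ∧ (∀ A, x * A = 0 ↔ u * A = 0) ∧
      (∀ A, A * x = 0 ↔ A * u = 0) := by
  set s : H →L[ℂ] H := CFC.abs x with hs
  have hss : s * s = star x * x := CFC.abs_mul_abs x
  have hsa : star s = s := (IsSelfAdjoint.of_nonneg (CFC.abs_nonneg x)).star_eq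
  have hsM : s ∈ M := by
    apply aux_mem
    intro y hy
    have h1 : Commute x y := aux_comm hx hy
    have h2 : Commute x (star y) := aux_comm hx (star_mem hy)
    exact (h1.cfcAbs_left h2).symm
  let K : Submodule ℂ H := (LinearMap.range (s : H →ₗ[ℂ] H)).topologicalClosure
  have hKc : IsClosed (K : Set H) := Submodule.isClosed_topologicalClosure _
  have : CompleteSpace K := hKc.completeSpace_coe
  have hsK : ∀ ξ, s ξ ∈ K := fun ξ => Submodule.le_topologicalClosure _ ⟨ξ, rfl⟩
  -- operators vanishing on the range of s vanish on K
  have hvan : ∀ A : H →L[ℂ] H, A * s = 0 → ∀ ξ ∈ K, A ξ = 0 := by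
    intro A hA
    have : K ≤ LinearMap.ker (A : H →ₗ[ℂ] H) := by
      apply Submodule.topologicalClosure_minimal
      · rintro _ ⟨ξ, rfl⟩
        exact congrArg (fun T : H →L[ℂ] H => T ξ) hA
      · exact A.isClosed_ker
    exact fun ξ hξ => this hξ
  set P := K.starProjection with hP
  have hPM : IsProjIn M P := by
    apply aux_projIn
    intro y hy
    have h1 : (P * y - y) * s = 0 := by
      ext ξ
      have : (y * s) ξ = (s * y) ξ := by rw [aux_comm hsM hy]
      have h2 : y (s ξ) = s (y ξ) := this
      simp only [mul_apply_eq_comp, sub_apply, h2, zero_apply]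
      rw [sub_eq_zero]
      exact Submodule.starProjection_eq_self_iff.2 (hsK _)
    intro ξ hξ
    have := hvan _ h1 ξ hξ
    exact Submodule.starProjection_eq_self_iff.1 (sub_eq_zero.1 this)
  obtain ⟨hPM, hPs, hPP⟩ := hPM
  have hPs : star P = P := hPs.star_eq
  have hvan' : ∀ A : H →L[ℂ] H, A * s = 0 → A * P = 0 := by
    intro A hA
    ext ξ
    exact hvan A hA _ (Submodule.starProjection_apply_mem _ _)
  have hvan'' : ∀ A : H →L[ℂ] H, s * A = 0 → P * A = 0 := by
    intro A hA
    have := hvan' (star A) (by simpa [hsa] using congrArg star hA)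
    simpa [hPs] using congrArg star this
  have hPs' : P * s = s := by
    ext ξ
    exact Submodule.starProjection_eq_self_iff.2 (hsK _)
  have hsP : s * P = s := by simpa [hPs, hsa] using congrArg star hPs'
  -- the isometry
  let e : H →ₗ[ℂ] K := LinearMap.codRestrict K (s : H →ₗ[ℂ] H) hsK
  have he : DenseRange e := by
    intro k
    rw [Metric.mem_closure_iff]
    intro ε hε
    have hk : (k : H) ∈ closure (LinearMap.range (s : H →ₗ[ℂ] H) : Set H) := k.2
    obtain ⟨_, ⟨ξ, rfl⟩, hb⟩ := Metric.mem_closure_iff.1 hk ε hε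
    exact ⟨e ξ, ⟨ξ, rfl⟩, hb⟩
  have hnorm : ∀ ξ, ‖(x : H →ₗ[ℂ] H) ξ‖ ≤ 1 * ‖e ξ‖ := by
    intro ξ
    rw [one_mul]
    exact (aux_isom x s (by rw [hsa, hss]) ξ).le
  let w : K →L[ℂ] H := (x : H →ₗ[ℂ] H).extendOfNorm e
  have hw : ∀ ξ, w (e ξ) = x ξ := fun ξ => LinearMap.extendOfNorm_eq he ⟨1, hnorm⟩ ξ
  let u : H →L[ℂ] H := w.comp K.orthogonalProjectionOnto
  have hus : u * s = x := by
    ext ξ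
    rw [← hw]
    change w (K.orthogonalProjectionOnto (s ξ)) = _
    congr 1
    exact Submodule.orthogonalProjectionOnto_mem_subspace_eq_self (K := K) (e ξ)
  have huP : u * P = u := by
    ext ξ
    change w (K.orthogonalProjectionOnto (K.orthogonalProjectionOnto ξ : H)) = _
    rw [Submodule.orthogonalProjectionOnto_mem_subspace_eq_self]
    rfl
  clear_value u P
  have huu : star u * u = P := by
    have h1 : (s * (star u * u - P)) * s = 0 := by
      have : s * (star u * u) * s = star (u * s) * (u * s) := by simp [hsa, mul_assoc]
      rw [mul_sub, sub_mul, this, hus, hsP, hss, sub_self]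
    have h2 := hvan'' _ ((mul_assoc _ _ _).symm.trans (hvan' _ h1))
    have h3 : P * star u = star u := by simpa [hPs] using congrArg star huP
    rw [sub_mul, mul_assoc (star u), huP, hPP, mul_sub, ← mul_assoc, h3, hPP, sub_eq_zero] at h2
    exact h2
  refine ⟨u, ?_, ?_, ?_, ?_⟩
  · apply aux_mem
    intro y hy
    have h1 : (y * u - u * y) * s = 0 := by
      rw [sub_mul, mul_assoc, hus, mul_assoc, ← aux_comm hsM hy, ← mul_assoc, hus,
        aux_comm hx hy, sub_self]
    have := hvan' _ h1
    rwa [sub_mul, mul_assoc, huP, mul_assoc, ← aux_comm hPM hy, ← mul_assoc, huP,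
      sub_eq_zero] at this
  · rw [mul_assoc, huu, huP]
  · intro A
    constructor
    · intro hA
      have : star (s * A) * (s * A) = 0 := by
        rw [star_mul, hsa, mul_assoc, ← mul_assoc s, hss, mul_assoc (star x), hA]; simp
      have := CStarRing.star_mul_self_eq_zero_iff _ |>.1 this
      rw [← huP, mul_assoc, hvan'' _ this, mul_zero]
    · intro hA
      rw [← hus, ← hsP, ← huu]
      simp [mul_assoc, hA]
  · intro A
    constructor
    · intro hA
      have := hvan' (A * u) (by rw [mul_assoc, hus, hA])
      rwa [mul_assoc, huP] at this
    · intro hA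
      rw [← hus, ← mul_assoc, hA, zero_mul]

theorem aux_pi_norm (T : H →L[ℂ] H) (hT : T * star T * T = T) (ξ : H) : ‖T ξ‖ ≤ ‖ξ‖ := by
  have h1 : ‖star T * T‖ = ‖T‖ * ‖T‖ := CStarRing.norm_star_mul_self
  have h2 : ‖star (star T * T) * (star T * T)‖ = ‖star T * T‖ * ‖star T * T‖ :=
    CStarRing.norm_star_mul_self
  have h3 : star (star T * T) * (star T * T) = star T * T := by
    rw [star_mul, star_star, mul_assoc, ← mul_assoc T, hT]
  rw [h3, h1] at h2
  have h4 : ‖T‖ ≤ 1 := by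
    by_contra hc
    push Not at hc
    have : 1 < ‖T‖ * ‖T‖ := by nlinarith
    nlinarith
  calc ‖T ξ‖ ≤ ‖T‖ * ‖ξ‖ := T.le_opNorm ξ
    _ ≤ 1 * ‖ξ‖ := by gcongr
    _ = ‖ξ‖ := one_mul _

theorem aux_sum {ι : Type*} (U : ι → H →L[ℂ] H) (h0 : ∀ i, U i * star (U i) * U i = U i)
    (h1 : ∀ i j, i ≠ j → star (U i) * U j = 0) (h2 : ∀ i j, i ≠ j → U i * star (U j) = 0) :
    ∃ T : H →L[ℂ] H, ∀ ξ, HasSum (fun i => U i ξ) (T ξ) := by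
  classical
  have hfin : ∀ (F : Finset ι) (ξ : H), ‖∑ i ∈ F, U i ξ‖ ≤ ‖ξ‖ := by
    intro F ξ
    have : (∑ i ∈ F, U i) * star (∑ i ∈ F, U i) * (∑ i ∈ F, U i) = ∑ i ∈ F, U i := by
      conv_lhs => rw [Finset.mul_sum]
      apply Finset.sum_congr rfl
      intro i hi
      have e1 : star (∑ i ∈ F, U i) * U i = star (U i) * U i := by
        rw [star_sum, Finset.sum_mul, Finset.sum_eq_single i]
        · intro j _ hj
          exact h1 j i hj
        · intro h; exact absurd hi h
      have e2 : (∑ i ∈ F, U i) * star (U i) = U i * star (U i) := by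
        rw [Finset.sum_mul, Finset.sum_eq_single i]
        · intro j _ hj
          exact h2 j i hj
        · intro h; exact absurd hi h
      rw [mul_assoc, e1, ← mul_assoc, e2, h0]
    have := aux_pi_norm _ this ξ
    simpa [sum_apply] using this
  have hO : OrthogonalFamily ℂ (fun i => LinearMap.range (U i : H →ₗ[ℂ] H))
      (fun i => (LinearMap.range (U i : H →ₗ[ℂ] H)).subtypeₗᵢ) := by
    rintro i j hij ⟨_, ⟨ξ, rfl⟩⟩ ⟨_, ⟨η, rfl⟩⟩
    change inner ℂ (U i ξ) (U j η) = 0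
    rw [← ContinuousLinearMap.adjoint_inner_right, ← star_eq_adjoint]
    have : star (U i) (U j η) = (star (U i) * U j) η := rfl
    rw [this, h1 i j hij]
    simp
  have hsummable : ∀ ξ, Summable (fun i => U i ξ) := by
    intro ξ
    let f : ∀ i, LinearMap.range (U i : H →ₗ[ℂ] H) := fun i => ⟨U i ξ, ⟨ξ, rfl⟩⟩
    have := (hO.summable_iff_norm_sq_summable f).2 (by
      apply summable_of_sum_le (c := ‖ξ‖ ^ 2)
      · intro i; positivity
      · intro F
        rw [← hO.norm_sum f F]
        have := hfin F ξ
        gcongr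
        exact this)
    exact this
  let L : H →ₗ[ℂ] H :=
    { toFun := fun ξ => ∑' i, U i ξ
      map_add' := by
        intro ξ η
        simp only [map_add]
        exact (hsummable ξ).tsum_add (hsummable η)
      map_smul' := by
        intro c ξ
        simp only [map_smul, RingHom.id_apply]
        exact (hsummable ξ).tsum_const_smul c }
  refine ⟨L.mkContinuous 1 ?_, fun ξ => (hsummable ξ).hasSum⟩
  intro ξ
  rw [one_mul]
  have := ((hsummable ξ).hasSum.norm)
  exact le_of_tendsto this (Filter.Eventually.of_forall fun F => hfin F ξ)

theorem aux_sum' (M : VonNeumannAlgebra H) {ι : Type*} (U : ι → H →L[ℂ] H) (hM : ∀ i, U i ∈ M)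
    (h0 : ∀ i, U i * star (U i) * U i = U i)
    (h1 : ∀ i j, i ≠ j → star (U i) * U j = 0) (h2 : ∀ i j, i ≠ j → U i * star (U j) = 0) :
    ∃ T ∈ M, T * star T * T = T ∧ (∀ i, T * star T * U i = U i) ∧
      (∀ i, U i * (star T * T) = U i) ∧ (∀ A, (∀ i, A * U i = U i) → A * T = T) ∧
      (∀ A, (∀ i, U i * A = U i) → T * A = T) := by
  obtain ⟨T, hT⟩ := aux_sum U h0 h1 h2
  have hTA : ∀ A, (∀ i, U i * A = U i) → T * A = T := by
    intro A hA
    ext ξ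
    have e : (fun i => U i (A ξ)) = fun i => U i ξ := by
      funext i
      exact congrArg (fun V : H →L[ℂ] H => V ξ) (hA i)
    have := hT (A ξ)
    rw [e] at this
    exact this.unique (hT ξ)
  have hAT : ∀ A, (∀ i, A * U i = U i) → A * T = T := by
    intro A hA
    ext ξ
    have e : (fun i => A (U i ξ)) = fun i => U i ξ := by
      funext i
      exact congrArg (fun V : H →L[ℂ] H => V ξ) (hA i)
    have := A.hasSum (hT ξ)
    rw [e] at this
    exact this.unique (hT ξ)
  have hTs : ∀ i, T * star (U i) = U i * star (U i) := by
    intro i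
    ext ξ
    have a1 := hT (star (U i) ξ)
    have a2 := hasSum_single (f := fun j => U j (star (U i) ξ)) i (by
      intro j hj
      exact congrArg (fun V : H →L[ℂ] H => V ξ) (h2 j i hj))
    exact a1.unique a2
  have hsT : ∀ i, star (U i) * T = star (U i) * U i := by
    intro i
    ext ξ
    have a1 := (star (U i)).hasSum (hT ξ)
    have a2 := hasSum_single (f := fun j => star (U i) (U j ξ)) i (by
      intro j hj
      exact congrArg (fun V : H →L[ℂ] H => V ξ) (h1 i j hj.symm))
    exact a1.unique a2
  have hsT' : ∀ i, star T * U i = star (U i) * U i := by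
    intro i
    simpa using congrArg star (hsT i)
  have hTT : ∀ i, T * star T * U i = U i := by
    intro i
    rw [mul_assoc, hsT', ← mul_assoc, hTs, h0]
  refine ⟨T, ?_, hAT _ hTT, hTT, ?_, hAT, hTA⟩
  · apply aux_mem
    intro y hy
    ext ξ
    have e : (fun i => y (U i ξ)) = fun i => U i (y ξ) := by
      funext i
      exact congrArg (fun V : H →L[ℂ] H => V ξ) (aux_comm (hM i) hy).symm
    have := y.hasSum (hT ξ)
    rw [e] at this
    exact this.unique (hT (y ξ))
  · intro i
    have : U i * star T = U i * star (U i) := by simpa using congrArg star (hTs i)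
    rw [← mul_assoc, this, mul_assoc, hsT, ← mul_assoc, h0]

/-- Comparison theorem. -/
theorem aux_compare (M : VonNeumannAlgebra H) (a b : H →L[ℂ] H) (ha : IsProjIn M a)
    (hb : IsProjIn M b) :
    ∃ z, IsCentralProj M z ∧ (∃ v ∈ M, star v * v = z * a ∧ z * b * v = v) ∧
      (∃ v ∈ M, star v * v = (1 - z) * b ∧ (1 - z) * a * v = v) := by
  obtain ⟨haM, has, haa⟩ := ha
  obtain ⟨hbM, hbs, hbb⟩ := hb
  have has : star a = a := has
  have hbs : star b = b := hbs
  let X : Set (H →L[ℂ] H) := {u | u ∈ M ∧ u * star u * u = u ∧ b * u = u ∧ u * a = u ∧ u ≠ 0}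
  let Q : Set (Set (H →L[ℂ] H)) := {S | S ⊆ X ∧
    S.Pairwise fun u w => star u * w = 0 ∧ u * star w = 0}
  obtain ⟨S, hS⟩ := zorn_subset Q (by
    intro c hc hch
    refine ⟨⋃₀ c, ⟨?_, ?_⟩, fun s hs => Set.subset_sUnion_of_mem hs⟩
    · exact Set.sUnion_subset fun s hs => (hc hs).1
    · exact (Set.pairwise_sUnion hch.directedOn).2 fun s hs => (hc hs).2)
  have hSX : S ⊆ X := hS.prop.1
  have hSP := hS.prop.2
  obtain ⟨T, hTM, hTTT, hT1, hT2, hT3, hT4⟩ := aux_sum' M (fun u : S => (u : H →L[ℂ] H))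
    (fun u => (hSX u.2).1) (fun u => (hSX u.2).2.1)
    (fun u w h => (hSP u.2 w.2 (fun e => h (Subtype.ext e))).1)
    (fun u w h => (hSP u.2 w.2 (fun e => h (Subtype.ext e))).2)
  have hbT : b * T = T := hT3 b fun u => (hSX u.2).2.2.1
  have hTa : T * a = T := hT4 a fun u => (hSX u.2).2.2.2.1
  have haT : a * star T = star T := by simpa [has] using congrArg star hTa
  have hTb : star T * b = star T := by simpa [hbs] using congrArg star hbT
  have hTTT' : star T * T * star T = star T := by
    simpa [mul_assoc] using congrArg star hTTT
  set a0 := a - star T * T with ha0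
  set b0 := b - T * star T with hb0
  have ha0M : a0 ∈ M := sub_mem haM (mul_mem (star_mem hTM) hTM)
  have hb0M : b0 ∈ M := sub_mem hbM (mul_mem hTM (star_mem hTM))
  have ha0s : star a0 = a0 := by simp [ha0, has]
  have hb0s : star b0 = b0 := by simp [hb0, hbs]
  have hTa0 : T * a0 = 0 := by rw [ha0, mul_sub, hTa, ← mul_assoc, hTTT, sub_self]
  have hTb0 : star T * b0 = 0 := by rw [hb0, mul_sub, hTb, ← mul_assoc, hTTT', sub_self]
  have haa0 : a * a0 = a0 := by rw [ha0, mul_sub, haa, ← mul_assoc, haT]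
  have hbb0 : b * b0 = b0 := by rw [hb0, mul_sub, hbb, ← mul_assoc, hbT]
  have ha0a : a0 * a = a0 := by simpa [has, ha0s] using congrArg star haa0
  have hb00 : b0 * b0 = b0 := by
    conv_lhs => rw [hb0, sub_mul, hbb0, mul_assoc, hTb0, mul_zero, sub_zero]
  have ha00 : a0 * a0 = a0 := by
    conv_lhs => rw [ha0, sub_mul, haa0, mul_assoc, hTa0, mul_zero, sub_zero]
  have hzero : ∀ x ∈ M, b0 * x * a0 = 0 := by
    intro x hx
    by_contra hne
    obtain ⟨u, huM, huuu, hu1, hu2⟩ := aux_polar M (b0 * x * a0)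
      (mul_mem (mul_mem hb0M hx) ha0M)
    have hua : u * a0 = u := by
      have := (hu1 (1 - a0)).1 (by
        rw [mul_sub, mul_one, mul_assoc (b0 * x), ha00, sub_self])
      rw [mul_sub, mul_one, sub_eq_zero] at this
      exact this.symm
    have hbu : b0 * u = u := by
      have := (hu2 (1 - b0)).1 (by
        rw [sub_mul, one_mul, ← mul_assoc, ← mul_assoc, hb00, sub_self])
      rw [sub_mul, one_mul, sub_eq_zero] at this
      exact this.symm
    have hu0 : u ≠ 0 := by
      rintro rfl
      apply hne
      have := (hu1 1).2 (by simp)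
      rwa [mul_one] at this
    have huX : u ∈ X := by
      refine ⟨huM, huuu, ?_, ?_, hu0⟩
      · rw [← hbu, ← mul_assoc, hbb0]
      · rw [← hua, mul_assoc, ha0a]
    have horth : ∀ w ∈ S, star u * w = 0 ∧ u * star w = 0 := by
      intro w hw
      have e1 : T * star T * w = w := hT1 ⟨w, hw⟩
      have e2 : w * (star T * T) = w := hT2 ⟨w, hw⟩
      constructor
      · rw [← hbu, star_mul, hb0s, ← e1]
        have : b0 * T = 0 := by simpa [hb0s] using congrArg star hTb0
        rw [mul_assoc, mul_assoc T, ← mul_assoc b0, this]; simp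
      · rw [← hua, ← e2]
        have : a0 * star T = 0 := by simpa [ha0s] using congrArg star hTa0
        simp only [star_mul, star_star]
        rw [mul_assoc, mul_assoc (star T), ← mul_assoc a0, this]; simp
    have hins : insert u S ∈ Q := by
      refine ⟨Set.insert_subset huX hSX, ?_⟩
      apply hSP.insert
      intro w hw _
      refine ⟨horth w hw, ?_, ?_⟩
      · simpa using congrArg star (horth w hw).1
      · simpa using congrArg star (horth w hw).2
    have huS : u ∈ S := hS.le_of_ge hins (Set.subset_insert _ _) (Set.mem_insert _ _)
    exact hu0 (CStarRing.star_mul_self_eq_zero_iff _ |>.1 (horth u huS).1)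
  -- the central projection
  let K : Submodule ℂ H := ⨅ x : M, LinearMap.ker ((b0 * x.1 : H →L[ℂ] H) : H →ₗ[ℂ] H)
  have hKmem : ∀ ξ, ξ ∈ K ↔ ∀ x ∈ M, b0 (x ξ) = 0 := by
    intro ξ
    simp only [K, Submodule.mem_iInf, LinearMap.mem_ker, Subtype.forall]
    rfl
  have hKc : IsClosed (K : Set H) := by
    simp only [K, Submodule.coe_iInf]
    exact isClosed_iInter fun x => (b0 * x.1 : H →L[ℂ] H).isClosed_ker
  have : CompleteSpace K := hKc.completeSpace_coe
  have hzM : IsProjIn M K.starProjection := by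
    apply aux_projIn
    intro y hy ξ hξ
    rw [hKmem] at hξ ⊢
    intro x hx
    have : b0 (x (y ξ)) = y (b0 (x ξ)) :=
      congrArg (fun V : H →L[ℂ] H => V ξ) (aux_comm (mul_mem hb0M hx) hy)
    rw [this, hξ x hx, map_zero]
  have hzM' : K.starProjection ∈ M.commutant := by
    apply aux_proj_mem
    rw [M.commutant_commutant]
    intro y hy ξ hξ
    rw [hKmem] at hξ ⊢
    intro x hx
    exact hξ (x * y) (mul_mem hx hy)
  have hza : K.starProjection * a0 = a0 := by
    ext ξ
    apply Submodule.starProjection_eq_self_iff.2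
    rw [hKmem]
    intro x hx
    exact congrArg (fun V : H →L[ℂ] H => V ξ) (hzero x hx)
  have hbz : b0 * K.starProjection = 0 := by
    ext ξ
    exact (hKmem _).1 (Submodule.starProjection_apply_mem K ξ) 1 (one_mem M)
  set z := K.starProjection
  clear_value z
  obtain ⟨hzMem, hzs, hzz⟩ := hzM
  have hzs : star z = z := hzs
  have hc : ∀ x ∈ M, z * x = x * z := fun x hx => (aux_comm hx hzM').symm
  have hw1 : (1 - z) * (1 - z) = 1 - z := by simp [mul_sub, sub_mul, hzz]
  have hws : star (1 - z) = 1 - z := by simp [hzs]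
  have hwc : ∀ x ∈ M, (1 - z) * x = x * (1 - z) := fun x hx => by
    rw [sub_mul, mul_sub, hc x hx, one_mul, mul_one]
  have hwM : (1 - z) ∈ M := sub_mem (one_mem M) hzMem
  refine ⟨1 - z, ⟨⟨hwM, hws, hw1⟩, hwc⟩, ⟨T * (1 - z), mul_mem hTM hwM, ?_, ?_⟩,
    ⟨star T * z, mul_mem (star_mem hTM) hzMem, ?_, ?_⟩⟩
  · have e : (1 - z) * a0 = 0 := by rw [sub_mul, one_mul, hza, sub_self]
    rw [ha0, mul_sub, sub_eq_zero] at e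
    rw [e, star_mul, hws, mul_assoc, ← mul_assoc (star T),
      ← hwc _ (mul_mem (star_mem hTM) hTM), ← mul_assoc, hw1]
  · rw [hwc b hbM, mul_assoc, ← mul_assoc (1 - z), hwc T hTM, mul_assoc, hw1, ← mul_assoc, hbT]
  · have e := hbz
    rw [hb0, sub_mul, sub_eq_zero] at e
    rw [sub_sub_cancel, hc b hbM, e, star_mul, star_star, hzs, mul_assoc, ← mul_assoc T,
      hc _ (mul_mem (mul_mem hTM (star_mem hTM)) hzMem), mul_assoc _ z z, hzz]
  · rw [sub_sub_cancel, hc a haM, mul_assoc, ← mul_assoc z, hc _ (star_mem hTM), mul_assoc, hzz,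
      ← mul_assoc, haT]

theorem aux_absorb (b r : H →L[ℂ] H) (hbb : star b * b = r) (hrs : IsSelfAdjoint r)
    (hrr : r * r = r) : b * r = b := by
  have : star (b * r - b) * (b * r - b) = 0 := by
    have hrs : star r = r := hrs
    have e : star (b * r - b) * (b * r - b) = r * (star b * b) * r - r * (star b * b)
        - (star b * b) * r + star b * b := by
      simp only [star_sub, star_mul, hrs]; noncomm_ring
    rw [e, hbb, hrr, hrr]; simp
  exact sub_eq_zero.1 (CStarRing.star_mul_self_eq_zero_iff _ |>.1 this)

/-- Schröder–Bernstein, core case. -/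
theorem aux_sb_core (M : VonNeumannAlgebra H) (p f v : H →L[ℂ] H) (hp : IsProjIn M p)
    (hf : IsProjIn M f) (hfp : p * f = f) (hv : v ∈ M) (hvv : star v * v = p) (hfv : f * v = v) :
    ∃ u ∈ M, star u * u = p ∧ u * star u = f := by
  obtain ⟨hpM, hps, hpp⟩ := hp
  obtain ⟨hfM, hfs, hff⟩ := hf
  have hps : star p = p := hps
  have hfs : star f = f := hfs
  have hpf : f * p = f := by simpa [hps, hfs] using congrArg star hfp
  have hpv : p * v = v := by rw [← hfv, ← mul_assoc, hfp]
  have hvf : star v * f = star v := by simpa [hfs] using congrArg star hfv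
  have hvsp : star v * p = star v := by simpa [hps] using congrArg star hpv
  let G : Set (Submodule ℂ H) := {L | IsClosed (L : Set H) ∧ (∀ ξ, (p - f) ξ ∈ L) ∧
    ∀ ξ ∈ L, v ξ ∈ L}
  let K : Submodule ℂ H := sInf G
  have hKmem : ∀ ξ, ξ ∈ K ↔ ∀ L ∈ G, ξ ∈ L := fun ξ => Submodule.mem_sInf
  have hKG : K ∈ G := by
    refine ⟨?_, ?_, ?_⟩
    · simp only [K, Submodule.coe_sInf]
      exact isClosed_biInter fun L hL => hL.1
    · intro ξ
      exact (hKmem _).2 fun L hL => hL.2.1 ξ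
    · intro ξ hξ
      exact (hKmem _).2 fun L hL => hL.2.2 ξ ((hKmem ξ).1 hξ L hL)
  have : CompleteSpace K := hKG.1.completeSpace_coe
  have hEP : IsProjIn M K.starProjection := by
    apply aux_projIn
    intro y hy
    have : K.comap (y : H →ₗ[ℂ] H) ∈ G := by
      refine ⟨hKG.1.preimage y.continuous, ?_, ?_⟩
      · intro ξ
        change y ((p - f) ξ) ∈ K
        have : y ((p - f) ξ) = (p - f) (y ξ) :=
          congrArg (fun V : H →L[ℂ] H => V ξ) (aux_comm (sub_mem hpM hfM) hy).symm
        rw [this]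
        exact hKG.2.1 _
      · intro ξ hξ
        change y (v ξ) ∈ K
        have : y (v ξ) = v (y ξ) :=
          congrArg (fun V : H →L[ℂ] H => V ξ) (aux_comm hv hy).symm
        rw [this]
        exact hKG.2.2 _ hξ
    intro ξ hξ
    exact (hKmem ξ).1 hξ _ this
  have hEe : K.starProjection * (p - f) = p - f := by
    ext ξ
    exact Submodule.starProjection_eq_self_iff.2 (hKG.2.1 ξ)
  have hEv : K.starProjection * (v * K.starProjection) = v * K.starProjection := by
    ext ξ
    exact Submodule.starProjection_eq_self_iff.2
      (hKG.2.2 _ (Submodule.starProjection_apply_mem K ξ))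
  have hmin : ∀ F : H →L[ℂ] H, F * (p - f) = p - f → F * v * F = v * F →
      F * K.starProjection = K.starProjection := by
    intro F h1 h2
    have : LinearMap.ker ((1 - F : H →L[ℂ] H) : H →ₗ[ℂ] H) ∈ G := by
      have hm : ∀ ξ, ξ ∈ LinearMap.ker ((1 - F : H →L[ℂ] H) : H →ₗ[ℂ] H) ↔ F ξ = ξ := by
        intro ξ
        rw [LinearMap.mem_ker]
        change ξ - F ξ = 0 ↔ _
        rw [sub_eq_zero, eq_comm]
      refine ⟨(1 - F : H →L[ℂ] H).isClosed_ker, ?_, ?_⟩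
      · intro ξ
        rw [hm]
        exact congrArg (fun V : H →L[ℂ] H => V ξ) h1
      · intro ξ hξ
        rw [hm] at hξ ⊢
        have : F (v (F ξ)) = v (F ξ) := congrArg (fun V : H →L[ℂ] H => V ξ) h2
        rwa [hξ] at this
    ext ξ
    have := (hKmem _).1 (Submodule.starProjection_apply_mem K ξ) _ this
    have : K.starProjection ξ - F (K.starProjection ξ) = 0 := this
    exact (sub_eq_zero.1 this).symm
  set E := K.starProjection
  clear_value E
  obtain ⟨hEM, hEs, hEE⟩ := hEP
  have hEs : star E = E := hEs
  have hpE : p * E = E := hmin p (by rw [mul_sub, hpp, hfp]) (by rw [hpv])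
  have hEp : E * p = E := by simpa [hps, hEs] using congrArg star hpE
  -- F = E
  have hfix : (p - f) + v * E * star v = E := by
    set F := (p - f) + v * E * star v with hF
    have e1 : star v * (p - f) = 0 := by rw [mul_sub, hvsp, hvf, sub_self]
    have e2 : (p - f) * v = 0 := by rw [sub_mul, hpv, hfv, sub_self]
    have e3 : (p - f) * (p - f) = p - f := by
      rw [mul_sub, sub_mul, sub_mul, hpp, hpf, hfp, hff]; abel
    have hFs : star F = F := by simp [hF, hps, hfs, hEs, mul_assoc]
    have hEF : E * F = F := by
      rw [hF, mul_add, hEe, ← mul_assoc, hEv]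
    have hFv : F * v = v * E := by
      rw [hF, add_mul, e2, zero_add, mul_assoc, hvv, mul_assoc, hEp]
    have hFE : F * E = E := by
      apply hmin
      · conv_lhs => rw [hF, add_mul, e3, mul_assoc, e1, mul_zero, add_zero]
      · rw [hFv, mul_assoc, hEF]
    have := congrArg star hFE
    rw [star_mul, hFs, hEs, hEF] at this
    exact this
  have hc1 : (p - E) * (v * E) = 0 := by rw [sub_mul, hEv, ← mul_assoc, hpv, sub_self]
  have hc2 : E * (p - E) = 0 := by rw [mul_sub, hEp, hEE, sub_self]
  have hc4 : (p - E) * (p - E) = p - E := by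
    rw [sub_mul, hc2, mul_sub, hpp, hpE, sub_zero]
  have hc3 : (p - E) * E = 0 := by rw [sub_mul, hpE, hEE, sub_self]
  have hcs : star (p - E) = p - E := by simp [hps, hEs]
  have hc1' : E * star v * (p - E) = 0 := by
    simpa [hps, hEs, mul_assoc] using congrArg star hc1
  refine ⟨v * E + (p - E), add_mem (mul_mem hv hEM) (sub_mem hpM hEM), ?_, ?_⟩
  · rw [star_add, star_mul, hEs, hcs, add_mul, mul_add, mul_add, hc1, hc1', hc4]
    rw [mul_assoc, ← mul_assoc (star v), hvv, hpE, hEE]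
    abel
  · rw [star_add, star_mul, hEs, hcs, add_mul, mul_add, mul_add, hc4, mul_assoc v E (p - E), hc2,
      ← mul_assoc (p - E), hc3, mul_assoc, ← mul_assoc E, hEE]
    rw [mul_assoc] at hfix
    have e : v * (E * star v) = E - (p - f) := eq_sub_of_add_eq' hfix
    rw [e, mul_zero, zero_mul]
    abel

/-- Schröder–Bernstein. -/
theorem aux_sb (M : VonNeumannAlgebra H) (p r a b : H →L[ℂ] H) (hp : IsProjIn M p)
    (hr : IsProjIn M r) (ha : a ∈ M) (haa : star a * a = p) (hra : r * a = a) (hb : b ∈ M)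
    (hbb : star b * b = r) (hpb : p * b = b) : MvNEquiv M p r := by
  have hbr : b * r = b := aux_absorb b r hbb hr.2.1 hr.2.2
  have hbbb : b * star b * b = b := by rw [mul_assoc, hbb, hbr]
  obtain ⟨u, hu, h1, h2⟩ := aux_sb_core M p (b * star b) (b * a) hp
    ⟨mul_mem hb (star_mem hb), by simp [IsSelfAdjoint], by rw [← mul_assoc, hbbb]⟩
    (by rw [← mul_assoc, hpb]) (mul_mem hb ha)
    (by rw [star_mul, mul_assoc, ← mul_assoc (star b), hbb, hra, haa])
    (by rw [← mul_assoc, hbbb])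
  have hup : b * star b * u = u := by
    have := aux_absorb (star u) (b * star b) (by rw [star_star, h2])
      (by simp [IsSelfAdjoint]) (by rw [← mul_assoc, hbbb])
    simpa using congrArg star this
  refine ⟨star b * u, mul_mem (star_mem hb) hu, ?_, ?_⟩
  · change star (star b * u) * (star b * u) = p
    rw [star_mul, star_star, mul_assoc, ← mul_assoc b, hup, h1]
  · change (star b * u) * star (star b * u) = r
    rw [star_mul, star_star, mul_assoc, ← mul_assoc u, h2, mul_assoc b, hbb, hbr, hbb]

theorem aux_split {M : VonNeumannAlgebra H} {z b v : H →L[ℂ] H} (hz : IsCentralProj M z)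
    (hb : IsProjIn M b) (h : z * b * v = v) : z * v = v ∧ b * v = v := by
  constructor
  · conv_lhs => rw [← h, mul_assoc, ← mul_assoc z z, hz.1.2.2, ← mul_assoc, h]
  · conv_lhs => rw [← h, hz.2 b hb.1, ← mul_assoc, ← mul_assoc, hb.2.2, ← hz.2 b hb.1, h]

theorem aux_half (M : VonNeumannAlgebra H) (f g u z c : H →L[ℂ] H) (hf : IsProjIn M f)
    (hu : u ∈ M) (huuu : u * star u * u = u) (hfu : f * u = u)
    (hz : IsCentralProj M z) (hc : c ∈ M) (hcc : star c * c = z * (g - star u * u))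
    (hzc : z * c = c) (hfc : (f - u * star u) * c = c) :
    ∃ d ∈ M, star d * d = z * g ∧ z * d = d ∧ f * d = d := by
  have hzs : star z = z := hz.1.2.1
  have hfs : star f = f := hf.2.1
  have huf : star u * f = star u := by simpa [hfs] using congrArg star hfu
  have huuu' : star u * u * star u = star u := by
    simpa [mul_assoc] using congrArg star huuu
  have huc : star u * c = 0 := by
    rw [← hfc, ← mul_assoc, mul_sub, huf, ← mul_assoc, huuu', sub_self, zero_mul]
  have hcu : star c * u = 0 := by simpa using congrArg star huc
  have hfc' : f * c = c := by
    conv_lhs => rw [← hfc, ← mul_assoc, mul_sub, hf.2.2, ← mul_assoc, hfu, hfc]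
  refine ⟨u * z + c, add_mem (mul_mem hu hz.1.1) hc, ?_, ?_, ?_⟩
  · rw [star_add, star_mul, hzs, add_mul, mul_add, mul_add, hcc, mul_assoc z (star u) c, huc,
      ← mul_assoc (star c), hcu, mul_assoc z, ← mul_assoc (star u),
      ← hz.2 _ (mul_mem (star_mem hu) hu), ← mul_assoc z z, hz.1.2.2, mul_sub]
    simp
  · rw [mul_add, hzc, ← mul_assoc, hz.2 u hu, mul_assoc, hz.1.2.2]
  · rw [mul_add, ← mul_assoc, hfu, hfc']

theorem aux_compl {M : VonNeumannAlgebra H} {p : H →L[ℂ] H} (hp : IsProjIn M p) :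
    IsProjIn M (1 - p) := by
  have hs : star p = p := hp.2.1
  refine ⟨sub_mem (one_mem M) hp.1, ?_, ?_⟩
  · change star (1 - p) = 1 - p
    simp [hs]
  · simp [mul_sub, sub_mul, hp.2.2]

/-- Polar decomposition of the product of two projections. -/
theorem aux_polar2 (M : VonNeumannAlgebra H) (f g : H →L[ℂ] H) (hf : IsProjIn M f)
    (hg : IsProjIn M g) : ∃ u ∈ M, u * star u * u = u ∧ f * u = u ∧ u * g = u ∧
      IsProjIn M (g - star u * u) ∧ IsProjIn M (f - u * star u) ∧
      f * (g - star u * u) = 0 ∧ g * (f - u * star u) = 0 ∧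
      (∀ A, f * g * A = 0 → u * A = 0) ∧ (∀ A, g * f * A = 0 → star u * A = 0) := by
  obtain ⟨u, hu, h0, h1, h2⟩ := aux_polar M (f * g) (mul_mem hf.1 hg.1)
  have hfs : star f = f := hf.2.1
  have hgs : star g = g := hg.2.1
  have hug : u * g = u := by
    have := (h1 (1 - g)).1 (by rw [mul_sub, mul_one, mul_assoc, hg.2.2, sub_self])
    rw [mul_sub, mul_one, sub_eq_zero] at this
    exact this.symm
  have hfu : f * u = u := by
    have := (h2 (1 - f)).1 (by rw [sub_mul, one_mul, ← mul_assoc, hf.2.2, sub_self])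
    rw [sub_mul, one_mul, sub_eq_zero] at this
    exact this.symm
  have huf : star u * f = star u := by simpa [hfs] using congrArg star hfu
  have hgu : g * star u = star u := by simpa [hgs] using congrArg star hug
  have h0' : star u * u * star u = star u := by
    simpa [mul_assoc] using congrArg star h0
  have h2' : ∀ A, g * f * A = 0 ↔ star u * A = 0 := by
    intro A
    have e1 : star (star A * (f * g)) = g * f * A := by simp [hfs, hgs, mul_assoc]
    have e2 : star (star A * u) = star u * A := by simp
    rw [← e1, ← e2, star_eq_zero, star_eq_zero]
    exact h2 _
  have m1 : u * (g - star u * u) = 0 := by rw [mul_sub, hug, ← mul_assoc, h0, sub_self]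
  have m2 : star u * (f - u * star u) = 0 := by rw [mul_sub, huf, ← mul_assoc, h0', sub_self]
  have k1 : g * (g - star u * u) = g - star u * u := by rw [mul_sub, hg.2.2, ← mul_assoc, hgu]
  have k2 : f * (f - u * star u) = f - u * star u := by rw [mul_sub, hf.2.2, ← mul_assoc, hfu]
  refine ⟨u, hu, h0, hfu, hug, ⟨sub_mem hg.1 (mul_mem (star_mem hu) hu), ?_, ?_⟩,
    ⟨sub_mem hf.1 (mul_mem hu (star_mem hu)), ?_, ?_⟩, ?_, ?_, fun A => (h1 A).1,
    fun A => (h2' A).1⟩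
  · change star _ = _
    simp [hgs]
  · conv_lhs => rw [sub_mul, k1, mul_assoc, m1, mul_zero, sub_zero]
  · change star _ = _
    simp [hfs]
  · conv_lhs => rw [sub_mul, k2, mul_assoc, m2, mul_zero, sub_zero]
  · have := (h1 _).2 m1
    rwa [mul_assoc, k1] at this
  · have := (h2' _).2 m2
    rwa [mul_assoc, k2] at this

theorem aux_dich (M : VonNeumannAlgebra H) (q g : H →L[ℂ] H) (hq : IsProjIn M q)
    (hg : IsProjIn M g) :
    ∃ z, IsCentralProj M z ∧
      (∃ d ∈ M, star d * d = z * g ∧ z * d = d ∧ (1 - q) * d = d) ∧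
      (∃ d ∈ M, star d * d = (1 - z) * (1 - g) ∧ (1 - z) * d = d ∧ q * d = d) := by
  have hf := aux_compl hq
  have hg' := aux_compl hg
  obtain ⟨u, hu, hu0, hfu, hug, hm1, hm2, hfm1, hgm2, hu1, hu2⟩ := aux_polar2 M (1 - q) g hf hg
  obtain ⟨s, hs, hs0, hes, hsg, hn2, hn1, hen2, hgn1, hs1, hs2⟩ := aux_polar2 M q (1 - g) hq hg'
  obtain ⟨z, hz, ⟨c, hc, hcc, hzc⟩, ⟨v, hv, hvv, hwv⟩⟩ := aux_compare M _ _ hm1 hm2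
  have hw : IsCentralProj M (1 - z) := ⟨aux_compl hz.1, fun x hx => by
    rw [sub_mul, mul_sub, hz.2 x hx, one_mul, mul_one]⟩
  refine ⟨z, hz, ?_, ?_⟩
  · obtain ⟨a1, a2⟩ := aux_split hz hm2 hzc
    exact aux_half M (1 - q) g u z c hf hu hu0 hfu hz hc hcc a1 a2
  · obtain ⟨a1, a2⟩ := aux_split hw hm1 hwv
    set m1 := g - star u * u
    set m2 := (1 - q) - u * star u with hm2d
    set n2 := (1 - g) - star s * s with hn2d
    set n1 := q - s * star s with hn1d
    -- n2 ≤ m2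
    have hgn2 : g * n2 = 0 := by
      have e1 : (1 - g) * n2 = n2 := by
        have e3 : (1 - g) * star s = star s := by
          simpa [show star (1 - g) = 1 - g from hg'.2.1] using congrArg star hsg
        rw [hn2d, mul_sub, hg'.2.2, ← mul_assoc, e3]
      rw [sub_mul, one_mul] at e1
      exact sub_eq_self.1 e1
    have hmn2 : m2 * n2 = n2 := by
      have e1 : (1 - q) * n2 = n2 := by rw [sub_mul, hen2, one_mul, sub_zero]
      have e2 : star u * n2 = 0 := hu2 _ (by rw [mul_assoc, e1, hgn2])
      conv_lhs => rw [hm2d, sub_mul, e1, mul_assoc, e2, mul_zero, sub_zero]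
    -- m1 ≤ n1
    have hgm1 : g * m1 = m1 := by
      have e3 : g * star u = star u := by
        simpa [show star g = g from hg.2.1] using congrArg star hug
      simp only [m1]
      rw [mul_sub, hg.2.2, ← mul_assoc, e3]
    have hnm1 : n1 * m1 = m1 := by
      have e1 : q * m1 = m1 := by
        rw [sub_mul, one_mul, sub_eq_zero] at hfm1
        exact hfm1.symm
      have e2 : star s * m1 = 0 := hs2 _ (by
        rw [mul_assoc, e1, sub_mul, one_mul, hgm1, sub_self])
      conv_lhs => rw [hn1d, sub_mul, e1, mul_assoc, e2, mul_zero, sub_zero]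
    have hn1v : n1 * v = v := by rw [← a2, ← mul_assoc, hnm1]
    have hn2s : star n2 = n2 := hn2.2.1
    refine aux_half M q (1 - g) s (1 - z) (v * n2) hq hs hs0 hes hw (mul_mem hv hn2.1) ?_ ?_ ?_
    · change _ = (1 - z) * n2
      rw [star_mul, hn2s, mul_assoc, ← mul_assoc (star v), hvv, mul_assoc (1 - z), hmn2,
        ← mul_assoc, ← hw.2 n2 hn2.1, mul_assoc, hn2.2.2]
    · rw [← mul_assoc, a1]
    · change n1 * _ = _
      rw [← mul_assoc, hn1v]

/-- Let `M` be a properly infinite von Neumann algebra and `q, r`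
projections with `z q ≺ z r` for every nonzero central projection `z`.
Then `1 - q ∼ 1`. -/
theorem compl_equiv_one (M : VonNeumannAlgebra H)
    (hM : ProperlyInfiniteProj M (1 : H →L[ℂ] H))
    (q r : H →L[ℂ] H) (hq : IsProjIn M q) (hr : IsProjIn M r)
    (h : ∀ z, IsCentralProj M z → z ≠ 0 →
      SubEquiv M (z * q) (z * r) ∧ ¬ MvNEquiv M (z * q) (z * r)) :
    MvNEquiv M (1 - q) 1 := by
  obtain ⟨-, e, he, heo, he1, -⟩ := hM
  obtain ⟨t0, ht0, h00, h01⟩ := he1 0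
  obtain ⟨t1, ht1, h10, h11⟩ := he1 1
  rw [← star_eq_adjoint] at h00 h01 h10 h11
  -- `star t0`, `star t1` are isometries with ranges `e 0`, `e 1`
  have hg0 : e 0 * star t0 = star t0 := by rw [← h00, mul_assoc, h01, mul_one]
  have hg1 : (1 - e 0) * star t1 = star t1 := by
    have a : e 1 * star t1 = star t1 := by rw [← h10, mul_assoc, h11, mul_one]
    have b : e 0 * e 1 = 0 := heo (by norm_num)
    rw [sub_mul, one_mul, ← a, ← mul_assoc, b]
    simp
  have hf := aux_compl hq
  obtain ⟨z, hz, ⟨d, hd, hdd, hzd, hfd⟩, ⟨c, hc, hcc, hwc, hqc⟩⟩ := aux_dich M q (e 0) hq (he 0)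
  have hw : IsCentralProj M (1 - z) := ⟨aux_compl hz.1, fun x hx => by
    rw [sub_mul, mul_sub, hz.2 x hx, one_mul, mul_one]⟩
  have hw0 : 1 - z = 0 := by
    by_contra hne
    obtain ⟨⟨r0, hr0, ⟨a, ha, haa, har⟩, hle⟩, hn⟩ := h _ hw hne
    rw [← star_eq_adjoint] at haa har
    apply hn
    have hproj : ∀ p, IsProjIn M p → IsProjIn M ((1 - z) * p) := by
      intro p hp
      refine ⟨mul_mem hw.1.1 hp.1, ?_, ?_⟩
      · change star _ = _
        rw [star_mul, show star p = p from hp.2.1, show star (1 - z) = 1 - z from hw.1.2.1,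
          hw.2 p hp.1]
      · rw [mul_assoc, ← mul_assoc p, ← hw.2 p hp.1, mul_assoc, hp.2.2, ← mul_assoc, hw.1.2.2]
    have hwq := hproj q hq
    have hwr := hproj r hr
    have hra : (1 - z) * r * a = a := by
      have e1 : a * star a * a = a := by
        rw [mul_assoc, haa]
        exact aux_absorb a _ haa hwq.2.1 hwq.2.2
      rw [← e1, har, ← mul_assoc, hle.2]
    have hrs : star r = r := hr.2.1
    refine aux_sb M _ _ a (c * star t1 * r) hwq hwr ha haa hra
      (mul_mem (mul_mem hc (star_mem ht1)) hr.1) ?_ ?_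
    · calc star (c * star t1 * r) * (c * star t1 * r)
          = r * (t1 * ((star c * c) * star t1) * r) := by
            simp only [star_mul, star_star, hrs, mul_assoc]
        _ = r * (((1 - z) * (t1 * star t1)) * r) := by
            rw [hcc, mul_assoc (1 - z), hg1, ← mul_assoc t1, ← hw.2 t1 ht1]
            simp only [mul_assoc]
        _ = (1 - z) * r := by
            rw [h11, mul_one, hw.2 r hr.1, ← mul_assoc, hr.2.2]
    · rw [← mul_assoc, ← mul_assoc, mul_assoc (1 - z), hqc, hwc]
  have hz1 : z = 1 := (sub_eq_zero.1 hw0).symm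
  rw [hz1, one_mul] at hdd
  have h1 : IsProjIn M (1 : H →L[ℂ] H) := ⟨one_mem M, by simp [IsSelfAdjoint], one_mul 1⟩
  have hfs : star (1 - q) = 1 - q := hf.2.1
  refine aux_sb M _ _ (1 - q) (d * star t0) hf h1 hf.1 (by rw [hfs, hf.2.2]) (one_mul _)
    (mul_mem hd (star_mem ht0)) ?_ ?_
  · rw [star_mul, star_star, mul_assoc, ← mul_assoc (star d), hdd, hg0, h01]
  · rw [← mul_assoc, hfd]
end
end

section
/- Let M be a finite von Neumann algebra with center-valued trace T. If p_α, p are projections with T(p_α) → T(p) strongly, then [p_α] → [p] in the quotient topology on P(M)/∼; conversely if [p_α] → [p] then T(p_α) → T(p) strongly. Hence T induces a homeomorphism of (P(M)/∼, QOT) onto a subspace of the positive unit ball of Z(M) with the strong topology. -/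
open ContinuousLinearMap Filter Topology

universe u

noncomputable section

variable {H : Type u} [NormedAddCommGroup H] [InnerProductSpace ℂ H] [CompleteSpace H]

theorem vna_mem_of_comm (M : VonNeumannAlgebra H) (x : H →L[ℂ] H)
    (h : ∀ m ∈ M.commutant, m * x = x * m) : x ∈ M := by
  rw [← M.commutant_commutant, VonNeumannAlgebra.mem_commutant_iff]
  exact h

theorem vna_comm_of_mem {M : VonNeumannAlgebra H} {x m : H →L[ℂ] H}
    (hx : x ∈ M) (hm : m ∈ M.commutant) : x * m = m * x :=
  VonNeumannAlgebra.mem_commutant_iff.1 hm x hx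

theorem vna_smul_mem {M : VonNeumannAlgebra H} {x : H →L[ℂ] H} (c : ℂ)
    (hx : x ∈ M) : c • x ∈ M := by
  apply vna_mem_of_comm
  intro m hm
  rw [mul_smul_comm, smul_mul_assoc, vna_comm_of_mem hx hm]

theorem vna_proj_mem (M : VonNeumannAlgebra H) (K : Submodule ℂ H) [K.HasOrthogonalProjection]
    (h : ∀ m ∈ M.commutant, ∀ k ∈ K, m k ∈ K) : K.starProjection ∈ M := by
  rw [VonNeumannAlgebra.IsStarProjection.mem_iff isStarProjection_starProjection]
  intro y hy
  rw [Submodule.range_starProjection]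
  intro k hk
  exact h y hy k hk

theorem vna_proj_isProjIn (M : VonNeumannAlgebra H) (K : Submodule ℂ H) [K.HasOrthogonalProjection]
    (h : ∀ m ∈ M.commutant, ∀ k ∈ K, m k ∈ K) : IsProjIn M K.starProjection :=
  ⟨vna_proj_mem M K h, isSelfAdjoint_starProjection K, K.isIdempotentElem_starProjection⟩

/-- operators killing the range of `A` kill the closure of the range. -/
theorem mul_starProjection_closure {A B : H →L[ℂ] H} (h : B * A = 0) :
    B * (A.range.topologicalClosure).starProjection = 0 := by
  have h1 : A.range.topologicalClosure ≤ B.ker := by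
    apply Submodule.topologicalClosure_minimal
    · rintro _ ⟨y, rfl⟩
      have := congr($h y)
      simpa using this
    · exact B.isClosed_ker
  ext ξ
  have := h1 (Submodule.starProjection_apply_mem A.range.topologicalClosure ξ)
  simpa using this

theorem central_cover (M : VonNeumannAlgebra H) (p q : H →L[ℂ] H)
    (hp : p ∈ M) (h : ∀ x ∈ M, q * x * p = 0) :
    ∃ z, IsCentralProj M z ∧ z * p = p ∧ q * z = 0 := by
  set S : Set H := {η | ∃ x ∈ M, ∃ ξ, η = x (p ξ)} with hS
  set K := (Submodule.span ℂ S).topologicalClosure with hK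
  have hinv : ∀ m : H →L[ℂ] H, (∀ η ∈ S, m η ∈ S) → ∀ k ∈ K, m k ∈ K := by
    intro m hm
    have : K ≤ K.comap (m : H →ₗ[ℂ] H) := by
      apply Submodule.topologicalClosure_minimal
      · rw [Submodule.span_le]
        intro η hη
        exact Submodule.le_topologicalClosure _ (Submodule.subset_span (hm η hη))
      · exact (Submodule.isClosed_topologicalClosure _).preimage m.continuous
    exact this
  have hM : ∀ m ∈ M, ∀ k ∈ K, m k ∈ K := by
    intro m hm
    apply hinv
    rintro _ ⟨x, hx, ξ, rfl⟩
    exact ⟨m * x, mul_mem hm hx, ξ, rfl⟩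
  have hM' : ∀ m ∈ M.commutant, ∀ k ∈ K, m k ∈ K := by
    intro m hm
    apply hinv
    rintro _ ⟨x, hx, ξ, rfl⟩
    refine ⟨x, hx, m ξ, ?_⟩
    have h1 := congr($(vna_comm_of_mem (mul_mem hx hp) hm) ξ)
    simpa using h1.symm
  refine ⟨K.starProjection, ⟨vna_proj_isProjIn M K hM', ?_⟩, ?_, ?_⟩
  · have : K.starProjection ∈ M.commutant := by
      apply vna_proj_mem
      rwa [M.commutant_commutant]
    intro x hx
    exact (vna_comm_of_mem hx this).symm
  · ext ξ
    have : p ξ ∈ K := Submodule.le_topologicalClosure _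
      (Submodule.subset_span ⟨1, one_mem M, ξ, rfl⟩)
    simpa using Submodule.starProjection_eq_self_iff.2 this
  · have h1 : K ≤ q.ker := by
      apply Submodule.topologicalClosure_minimal
      · rw [Submodule.span_le]
        rintro _ ⟨x, hx, ξ, rfl⟩
        have := congr($(h x hx) ξ)
        simpa using this
      · exact q.isClosed_ker
    ext ξ
    have := h1 (Submodule.starProjection_apply_mem K ξ)
    simpa using this

theorem exists_pi (M : VonNeumannAlgebra H) (x : H →L[ℂ] H) (hx : x ∈ M) :
    ∃ w ∈ M, w * star w * w = w ∧ (x ≠ 0 → w ≠ 0) ∧ (∀ b, x * b = 0 → w * b = 0) ∧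
      (∀ b, b * x = 0 → b * w = 0) := by
  set A : H →L[ℂ] H := CFC.abs x with hA
  have hAsa : star A = A := (CFC.abs_nonneg x).isSelfAdjoint.star_eq
  have hAA : A * A = star x * x := CFC.abs_mul_abs x
  have hAM : A ∈ M := by
    apply vna_mem_of_comm
    intro m hm
    have h1 : Commute m x := (vna_comm_of_mem hx hm).symm
    have h2 : Commute m (star x) := (vna_comm_of_mem (star_mem hx) hm).symm
    have h3 : Commute m A := by
      first
        | exact Commute.cfcAbs_right h1 h2
        | exact (Commute.cfcAbs_left h1.symm (by simpa using h2.symm)).symm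
        | exact (Commute.cfcAbs_right h1.symm (by simpa using (Commute.star_star h2).symm)).symm
        | exact (Commute.cfcAbs_right h1.symm (vna_comm_of_mem hx (star_mem hm)))
    exact h3
  have hnorm : ∀ ξ, ‖A ξ‖ = ‖x ξ‖ := by
    intro ξ
    have h1 : ∀ B : H →L[ℂ] H, ‖B ξ‖ ^ 2 = Complex.re (inner ℂ ((star B * B) ξ) ξ) := by
      intro B
      rw [star_eq_adjoint]
      exact B.apply_norm_sq_eq_inner_adjoint_left ξ
    have h2 : ‖A ξ‖ ^ 2 = ‖x ξ‖ ^ 2 := by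
      rw [h1, h1, hAsa, hAA]
    exact (sq_eq_sq₀ (norm_nonneg _) (norm_nonneg _)).1 h2
  set K := A.range.topologicalClosure with hK
  set P := K.starProjection with hP
  have hPM : P ∈ M := by
    apply vna_proj_mem
    intro m hm
    have : K ≤ K.comap (m : H →ₗ[ℂ] H) := by
      apply Submodule.topologicalClosure_minimal
      · rintro _ ⟨y, rfl⟩
        apply Submodule.le_topologicalClosure
        refine ⟨m y, ?_⟩
        have := congr($(vna_comm_of_mem hAM hm) y)
        simpa using this
      · exact (Submodule.isClosed_topologicalClosure _).preimage m.continuous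
    exact this
  have hPsa : star P = P := isSelfAdjoint_starProjection K
  have hPP : P * P = P := K.isIdempotentElem_starProjection
  have hmemK : ∀ ξ, A ξ ∈ K := fun ξ => Submodule.le_topologicalClosure _ ⟨ξ, rfl⟩
  have hPA : P * A = A := by
    ext ξ
    simpa using Submodule.starProjection_eq_self_iff.2 (hmemK ξ)
  have hAP : A * P = A := by
    have := congr(star $hPA)
    simpa [hPsa, hAsa] using this
  let e : H →ₗ[ℂ] K := (A : H →ₗ[ℂ] H).codRestrict K hmemK
  have hdense : DenseRange e := by
    intro ⟨k, hk⟩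
    rw [closure_subtype]
    have hk' : k ∈ closure (A.range : Set H) := hk
    convert hk' using 1
    congr 1
    ext y
    simp [e]
  let w0 : K →L[ℂ] H := (x : H →ₗ[ℂ] H).extendOfNorm e
  have hw0 : ∀ ξ, w0 (e ξ) = x ξ := by
    intro ξ
    refine LinearMap.extendOfNorm_eq hdense ⟨1, ?_⟩ ξ
    intro y
    rw [one_mul]
    exact (hnorm y).symm.le
  set w : H →L[ℂ] H := w0 ∘L K.orthogonalProjectionOnto with hw
  have hwA : w * A = x := by
    ext ξ
    rw [← hw0 ξ]
    have : K.orthogonalProjectionOnto (A ξ) = e ξ :=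
      Submodule.orthogonalProjectionOnto_mem_subspace_eq_self (e ξ)
    simp [hw, this]
  have hwP : w * P = w := by
    ext ξ
    have : K.orthogonalProjectionOnto (P ξ) = K.orthogonalProjectionOnto ξ :=
      Submodule.orthogonalProjectionOnto_mem_subspace_eq_self (K.orthogonalProjectionOnto ξ)
    simp [hw, this]
  have key : ∀ B : H →L[ℂ] H, B * A = 0 → B * P = 0 := fun B hB => mul_starProjection_closure hB
  have key2 : ∀ B : H →L[ℂ] H, A * B = 0 → P * B = 0 := by
    intro B hB
    have h1 := key (star B) (by rw [← hAsa, ← star_mul, hB, star_zero])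
    have := congr(star $h1)
    simpa [hPsa] using this
  have hPw : P * star w = star w := by
    have := congr(star $hwP)
    simpa [hPsa] using this
  have hww : star w * w = P := by
    have h1 : A * (star w * w * A - A) = 0 := by
      have h0 : star x = A * star w := by rw [← hwA, star_mul, hAsa]
      rw [mul_sub, hAA, h0, mul_assoc (star w), hwA, ← mul_assoc, sub_self]
    have h2 := key2 _ h1
    rw [mul_sub, ← mul_assoc, ← mul_assoc, hPw, hPA] at h2
    have h3 : (star w * w - 1) * A = 0 := by rw [sub_mul, one_mul, h2]
    have h4 := key _ h3
    rw [sub_mul, mul_assoc, hwP, one_mul, sub_eq_zero] at h4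
    exact h4
  refine ⟨w, ?_, ?_, ?_, ?_, ?_⟩
  · apply vna_mem_of_comm
    intro m hm
    have h1 : (m * w - w * m) * A = 0 := by
      rw [sub_mul, mul_assoc, hwA, mul_assoc, ← vna_comm_of_mem hAM hm, ← mul_assoc, hwA,
        vna_comm_of_mem hx hm, sub_self]
    have h2 := key _ h1
    rwa [sub_mul, mul_assoc, hwP, mul_assoc, ← vna_comm_of_mem hPM hm, ← mul_assoc, hwP,
      sub_eq_zero] at h2
  · rw [mul_assoc, hww, hwP]
  · intro hx0 hw0
    apply hx0
    rw [← hwA, hw0, zero_mul]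
  · intro b hb
    have : A * b = 0 := by
      ext ξ
      have h1 : x (b ξ) = 0 := congr($hb ξ)
      have h2 := hnorm (b ξ)
      rw [h1, norm_zero, norm_eq_zero] at h2
      simpa using h2
    rw [← hwP, mul_assoc, key2 _ this, mul_zero]
  · intro b hb
    rw [← hwP, ← mul_assoc]
    apply key
    rw [mul_assoc, hwA, hb]

theorem norm_le_one_of_pi {a : H →L[ℂ] H} (ha : a * star a * a = a) : ‖a‖ ≤ 1 := by
  have h1 : (star a * a) * (star a * a) = star a * a := by
    rw [mul_assoc, ← mul_assoc a, ha]
  have h2 : ‖star a * a‖ = ‖a‖ * ‖a‖ := CStarRing.norm_star_mul_self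
  have h3 : ‖star (star a * a) * (star a * a)‖ = ‖star a * a‖ * ‖star a * a‖ :=
    CStarRing.norm_star_mul_self
  rw [star_mul, star_star, h1, h2] at h3
  by_contra hc
  push Not at hc
  have h4 : 1 < ‖a‖ * ‖a‖ := by nlinarith
  nlinarith

theorem pi_finset_sum {ι : Type*} (v : ι → H →L[ℂ] H)
    (hv : ∀ i, v i * star (v i) * v i = v i)
    (h1 : ∀ i j, i ≠ j → star (v i) * v j = 0)
    (h2 : ∀ i j, i ≠ j → v i * star (v j) = 0) (s : Finset ι) :
    (∑ i ∈ s, v i) * star (∑ i ∈ s, v i) * (∑ i ∈ s, v i) = ∑ i ∈ s, v i := by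
  classical
  rw [star_sum, mul_assoc, Finset.sum_mul]
  refine Finset.sum_congr rfl fun i hi => ?_
  have e1 : v i * ∑ j ∈ s, star (v j) = v i * star (v i) := by
    rw [Finset.mul_sum]
    exact Finset.sum_eq_single i (fun j _ hj => h2 i j hj.symm) (fun h => absurd hi h)
  have e2 : star (v i) * ∑ j ∈ s, v j = star (v i) * v i := by
    rw [Finset.mul_sum]
    exact Finset.sum_eq_single i (fun j _ hj => h1 i j hj.symm) (fun h => absurd hi h)
  rw [← mul_assoc, e1, mul_assoc, e2, ← mul_assoc, hv]

theorem pi_sum_aux {ι : Type*} (v : ι → H →L[ℂ] H)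
    (hv : ∀ i, v i * star (v i) * v i = v i)
    (h1 : ∀ i j, i ≠ j → star (v i) * v j = 0)
    (h2 : ∀ i j, i ≠ j → v i * star (v j) = 0) :
    ∃ V : H →L[ℂ] H, ∀ ξ, HasSum (fun i => v i ξ) (V ξ) := by
  have hb : ∀ (s : Finset ι) (ξ : H), ‖∑ i ∈ s, v i ξ‖ ≤ ‖ξ‖ := by
    intro s ξ
    have := (∑ i ∈ s, v i).le_of_opNorm_le (norm_le_one_of_pi (pi_finset_sum v hv h1 h2 s)) ξ
    simpa using this
  have hsum : ∀ ξ, Summable (fun i => v i ξ) := by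
    intro ξ
    have hO : OrthogonalFamily ℂ (fun i => (v i).range) (fun i => (v i).range.subtypeₗᵢ) := by
      intro i j hij
      rintro ⟨_, a, rfl⟩ ⟨_, b, rfl⟩
      have h3 : star (v i) (v j b) = 0 := congr($(h1 i j hij) b)
      rw [star_eq_adjoint] at h3
      have : inner ℂ (v i a) (v j b) = 0 := by
        rw [← adjoint_inner_right, h3, inner_zero_right]
      simpa using this
    have h4 := hO.summable_iff_norm_sq_summable (fun i => ⟨v i ξ, ξ, rfl⟩)
    refine h4.2 ?_
    refine summable_of_sum_le (c := ‖ξ‖ ^ 2) (fun i => by positivity) fun s => ?_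
    rw [← hO.norm_sum]
    have := hb s ξ
    simp only [Submodule.coe_subtypeₗᵢ, Submodule.subtype_apply]
    gcongr
  let L : H →ₗ[ℂ] H :=
    { toFun := fun ξ => ∑' i, v i ξ
      map_add' := fun a b => by
        simp only [map_add]
        exact (hsum a).tsum_add (hsum b)
      map_smul' := fun c a => by
        simp only [map_smul, RingHom.id_apply]
        exact (hsum a).tsum_const_smul c }
  refine ⟨L.mkContinuous 1 fun ξ => ?_, fun ξ => (hsum ξ).hasSum⟩
  rw [one_mul]
  refine le_of_tendsto ((hsum ξ).hasSum.norm) (Filter.Eventually.of_forall fun s => hb s ξ)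

theorem pi_sum {ι : Type*} (v : ι → H →L[ℂ] H)
    (hv : ∀ i, v i * star (v i) * v i = v i)
    (h1 : ∀ i j, i ≠ j → star (v i) * v j = 0)
    (h2 : ∀ i j, i ≠ j → v i * star (v j) = 0) :
    ∃ V : H →L[ℂ] H, (∀ ξ, HasSum (fun i => v i ξ) (V ξ)) ∧
      (∀ ξ, HasSum (fun i => star (v i) ξ) (star V ξ)) := by
  obtain ⟨V, hV⟩ := pi_sum_aux v hv h1 h2
  obtain ⟨W, hW⟩ := pi_sum_aux (fun i => star (v i))
    (fun i => by
      have := congr(star $(hv i))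
      simpa [mul_assoc] using this)
    (fun i j hij => by simpa using h2 i j hij)
    (fun i j hij => by simpa using h1 i j hij)
  refine ⟨V, hV, ?_⟩
  have : star V = W := by
    rw [star_eq_adjoint, eq_comm, ContinuousLinearMap.eq_adjoint_iff]
    intro x y
    have e1 := (innerSL ℂ x).hasSum (hV y)
    have e2 := (innerSL ℂ y).hasSum (hW x)
    have e3 := (Complex.conjCLE : ℂ →L[ℝ] ℂ).hasSum e2
    have e4 : HasSum (fun i => inner ℂ x (v i y)) (inner ℂ (W x) y) := by
      convert e3 using 1
      · ext i
        simp [star_eq_adjoint, adjoint_inner_right]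
      · simp
    exact e4.unique e1
  rw [this]
  exact hW

theorem hasSum_ext {ι : Type*} {v v' : ι → H →L[ℂ] H} {V V' a b : H →L[ℂ] H}
    (hV : ∀ ξ, HasSum (fun i => v i ξ) (V ξ)) (hV' : ∀ ξ, HasSum (fun i => v' i ξ) (V' ξ))
    (h : ∀ i, a * v i * b = v' i) : a * V * b = V' := by
  ext ξ
  have h1 := a.hasSum (hV (b ξ))
  have h2 := hV' ξ
  have h3 : HasSum (fun i => v' i ξ) ((a * V * b) ξ) := by
    have h4 : (fun i => v' i ξ) = fun i => a (v i (b ξ)) := by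
      ext i
      rw [← h i]
      rfl
    rw [h4]
    exact h1
  exact h3.unique h2

theorem hasSum_single_ext {ι : Type*} {v : ι → H →L[ℂ] H} {V a : H →L[ℂ] H} (j : ι)
    (hV : ∀ ξ, HasSum (fun i => v i ξ) (V ξ))
    (h : ∀ i, j ≠ i → a * v i = 0) : a * V = a * v j := by
  ext ξ
  have h1 := a.hasSum (hV ξ)
  refine HasSum.unique h1 ?_
  refine hasSum_single j fun i hi => ?_
  exact congr($(h i hi.symm) ξ)

theorem max_pi (M : VonNeumannAlgebra H) (p q : H →L[ℂ] H) (hp : IsProjIn M p)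
    (hq : IsProjIn M q) :
    ∃ v ∈ M, v * star v * v = v ∧ v * p = v ∧ q * v = v ∧
      ∀ x ∈ M, (q - v * star v) * x * (p - star v * v) = 0 := by
  set F : Set (Set (H →L[ℂ] H)) := {S | (∀ v ∈ S, v ∈ M ∧ v * star v * v = v ∧ v * p = v ∧
    q * v = v) ∧ S.Pairwise (fun v w => star v * w = 0 ∧ v * star w = 0)} with hF
  obtain ⟨S, hS⟩ : ∃ S, Maximal (· ∈ F) S := by
    apply zorn_subset
    intro c hc hchain
    refine ⟨⋃₀ c, ⟨?_, ?_⟩, fun s hs => Set.subset_sUnion_of_mem hs⟩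
    · rintro v ⟨s, hs, hv⟩
      exact (hc hs).1 v hv
    · rw [Set.pairwise_sUnion hchain.directedOn]
      exact fun s hs => (hc hs).2
  obtain ⟨hS1, hS2⟩ := hS.prop
  let v : S → H →L[ℂ] H := fun i => i.1
  have hv : ∀ i, v i * star (v i) * v i = v i := fun i => (hS1 i.1 i.2).2.1
  have o1 : ∀ i j, i ≠ j → star (v i) * v j = 0 := fun i j hij =>
    (hS2 i.2 j.2 (fun h => hij (Subtype.ext h))).1
  have o2 : ∀ i j, i ≠ j → v i * star (v j) = 0 := fun i j hij =>
    (hS2 i.2 j.2 (fun h => hij (Subtype.ext h))).2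
  obtain ⟨V, hV, hV'⟩ := pi_sum v hv o1 o2
  have a1 : ∀ j, star (v j) * V = star (v j) * v j := fun j => hasSum_single_ext j hV (o1 j)
  have a2 : ∀ j, v j * star V = v j * star (v j) := fun j => hasSum_single_ext j hV' (o2 j)
  have a1' : ∀ j, star V * v j = star (v j) * v j := fun j => by
    simpa using congr(star $(a1 j))
  have a2' : ∀ j, V * star (v j) = v j * star (v j) := fun j => by
    simpa using congr(star $(a2 j))
  have hVM : V ∈ M := by
    apply vna_mem_of_comm
    intro m hm
    have e1 : m * V * 1 = V * m := by
      refine hasSum_ext hV (v' := fun i => v i * m) (fun ξ => hV (m ξ)) ?_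
      intro i
      rw [mul_one, vna_comm_of_mem (hS1 i.1 i.2).1 hm]
    simpa using e1
  have hVV : V * star V * V = V := by
    have := hasSum_ext (a := 1) (b := star V * V) hV hV (fun i => by
      rw [one_mul, ← mul_assoc, a2, mul_assoc, a1, ← mul_assoc, hv])
    simpa [mul_assoc] using this
  have hVp : V * p = V := by
    have := hasSum_ext (a := 1) (b := p) hV hV (fun i => by
      rw [one_mul]; exact (hS1 i.1 i.2).2.2.1)
    simpa using this
  have hqV : q * V = V := by
    have := hasSum_ext (a := q) (b := 1) hV hV (fun i => by
      rw [mul_one]; exact (hS1 i.1 i.2).2.2.2)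
    simpa using this
  refine ⟨V, hVM, hVV, hVp, hqV, ?_⟩
  intro x hx
  by_contra hne
  have hpsa : star p = p := hp.2.1
  have hqsa : star q = q := hq.2.1
  have hpV : p * star V = star V := by simpa [hpsa] using congr(star $hVp)
  have hVq : star V * q = star V := by simpa [hqsa] using congr(star $hqV)
  set e := p - star V * V with he
  set f := q - V * star V with hf
  have hesa : star e = e := by simp [he, hpsa]
  have hfsa : star f = f := by simp [hf, hqsa]
  have hVV' : star V * V * star V = star V := by
    have := congr(star $hVV)
    simpa [mul_assoc] using this
  have hee : e * e = e := by
    have h1 : p * (star V * V) = star V * V := by rw [← mul_assoc, hpV]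
    have h2 : (star V * V) * p = star V * V := by rw [mul_assoc, hVp]
    have h3 : (star V * V) * (star V * V) = star V * V := by rw [← mul_assoc, hVV']
    rw [he, sub_mul, mul_sub, mul_sub, hp.2.2, h1, h2, h3, sub_self, sub_zero]
  have hff : f * f = f := by
    have h1 : q * (V * star V) = V * star V := by rw [← mul_assoc, hqV]
    have h2 : (V * star V) * q = V * star V := by rw [mul_assoc, hVq]
    have h3 : (V * star V) * (V * star V) = V * star V := by rw [← mul_assoc, hVV]
    rw [hf, sub_mul, mul_sub, mul_sub, hq.2.2, h1, h2, h3, sub_self, sub_zero]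
  have heM : e ∈ M := sub_mem hp.1 (mul_mem (star_mem hVM) hVM)
  have hfM : f ∈ M := sub_mem hq.1 (mul_mem hVM (star_mem hVM))
  obtain ⟨w, hwM, hww, hw0, hwr, hwl⟩ := exists_pi M (f * x * e) (mul_mem (mul_mem hfM hx) heM)
  have hwe : w * e = w := by
    have := hwr (1 - e) (by rw [mul_sub, mul_one, mul_assoc (f * x), hee, sub_self])
    rw [mul_sub, mul_one, sub_eq_zero] at this
    exact this.symm
  have hfw : f * w = w := by
    have := hwl (1 - f) (by rw [sub_mul, one_mul, ← mul_assoc, ← mul_assoc, hff, sub_self])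
    rw [sub_mul, one_mul, sub_eq_zero] at this
    exact this.symm
  have hev : ∀ i, e * star (v i) = 0 := by
    intro i
    have h1 : p * star (v i) = star (v i) := by
      simpa [hpsa] using congr(star $((hS1 i.1 i.2).2.2.1))
    rw [he, sub_mul, h1, mul_assoc, a2', ← mul_assoc, a1']
    have := congr(star $(hv i))
    rw [star_mul, star_mul, star_star, ← mul_assoc] at this
    rw [this, sub_self]
  have hfv : ∀ i, f * v i = 0 := by
    intro i
    have h1 : q * v i = v i := (hS1 i.1 i.2).2.2.2
    rw [hf, sub_mul, h1, mul_assoc, a1', ← mul_assoc, a2', hv, sub_self]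
  have hwv : ∀ i, star w * v i = 0 := by
    intro i
    rw [← hfw, star_mul, hfsa, mul_assoc, hfv, mul_zero]
  have hwv' : ∀ i, w * star (v i) = 0 := by
    intro i
    rw [← hwe, mul_assoc, hev, mul_zero]
  have hwp : w * p = w := by
    have : e * p = e := by rw [he, sub_mul, hp.2.2, mul_assoc, hVp]
    rw [← hwe, mul_assoc, this]
  have hqw : q * w = w := by
    have : q * f = f := by rw [hf, mul_sub, hq.2.2, ← mul_assoc, hqV]
    rw [← hfw, ← mul_assoc, this]
  have hins : insert w S ∈ F := by
    refine ⟨?_, ?_⟩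
    · rintro u (rfl | hu)
      · exact ⟨hwM, hww, hwp, hqw⟩
      · exact hS1 u hu
    · refine hS2.insert ?_
      intro b hb _
      refine ⟨⟨hwv ⟨b, hb⟩, hwv' ⟨b, hb⟩⟩, ?_, ?_⟩
      · simpa [v] using congr(star $(hwv ⟨b, hb⟩))
      · simpa [v] using congr(star $(hwv' ⟨b, hb⟩))
  have hwS : w ∈ S := hS.le_of_ge hins (Set.subset_insert w S) (Set.mem_insert w S)
  apply hw0 hne
  have := hwv ⟨w, hwS⟩
  exact CStarRing.star_mul_self_eq_zero_iff w |>.1 this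

/-- The algebraic properties of a center-valued trace used below. -/
structure CTrace (M : VonNeumannAlgebra H) (T : (H →L[ℂ] H) → H →L[ℂ] H) : Prop where
  hmem : ∀ x ∈ M, T x ∈ M ∧ ∀ y ∈ M, T x * y = y * T x
  hadd : ∀ x y, x ∈ M → y ∈ M → T (x + y) = T x + T y
  hsmul : ∀ (c : ℂ) (x : H →L[ℂ] H), x ∈ M → T (c • x) = c • T x
  htr : ∀ x ∈ M, ∀ y ∈ M, T (x * y) = T (y * x)
  hpos : ∀ x, x ∈ M → x.IsPositive → (T x).IsPositive
  hfaithful : ∀ x, x ∈ M → x.IsPositive → T x = 0 → x = 0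
  hmod : ∀ z x, x ∈ M → IsCentralProj M z → T (z * x) = z * T x

theorem CTrace.sub {M : VonNeumannAlgebra H} {T : (H →L[ℂ] H) → H →L[ℂ] H} (hT : CTrace M T)
    {x y : H →L[ℂ] H} (hx : x ∈ M) (hy : y ∈ M) : T (x - y) = T x - T y := by
  have := hT.hadd (x - y) y (sub_mem hx hy) hy
  rw [sub_add_cancel] at this
  rw [this, add_sub_cancel_right]

theorem isPositive_of_proj {a : H →L[ℂ] H} (h1 : star a = a) (h2 : a * a = a) : a.IsPositive :=
  IsPositive.of_isStarProjection ⟨h2, h1⟩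

theorem compare (M : VonNeumannAlgebra H) (T : (H →L[ℂ] H) → H →L[ℂ] H) (hT : CTrace M T)
    (p q : H →L[ℂ] H) (hp : IsProjIn M p) (hq : IsProjIn M q) :
    ∃ q', IsProjIn M q' ∧ MvNEquiv M q q' ∧ ∃ z, IsCentralProj M z ∧
      T ((q' - p) * (q' - p)) = z * (T p - T q) + z * (T p - T q) - (T p - T q) ∧
      (q' - p) * (q' - p) * ((q' - p) * (q' - p)) = (q' - p) * (q' - p) := by
  have hpsa : star p = p := hp.2.1
  have hqsa : star q = q := hq.2.1
  have hpp := hp.2.2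
  have hqq := hq.2.2
  obtain ⟨v, hvM, hv, hvp, hqv, hvmax⟩ := max_pi M p q hp hq
  have hvM' := star_mem hvM
  have hv' : star v * v * star v = star v := by simpa [mul_assoc] using congr(star $hv)
  have hpv : p * star v = star v := by simpa [hpsa] using congr(star $hvp)
  have hvq : star v * q = star v := by simpa [hqsa] using congr(star $hqv)
  obtain ⟨e, he⟩ : ∃ e, e = star v * v := ⟨_, rfl⟩
  obtain ⟨f, hf⟩ : ∃ f, f = v * star v := ⟨_, rfl⟩
  have heM : e ∈ M := he ▸ mul_mem hvM' hvM
  have hfM : f ∈ M := hf ▸ mul_mem hvM hvM'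
  have hesa : star e = e := by simp [he]
  have hfsa : star f = f := by simp [hf]
  have hee : e * e = e := by rw [he, ← mul_assoc, hv']
  have hff : f * f = f := by rw [hf, ← mul_assoc, hv]
  have hpe : p * e = e := by rw [he, ← mul_assoc, hpv]
  have hep : e * p = e := by rw [he, mul_assoc, hvp]
  have hqf : q * f = f := by rw [hf, ← mul_assoc, hqv]
  have hfq : f * q = f := by rw [hf, mul_assoc, hvq]
  have hfv : f * v = v := by rw [hf, hv]
  have hTef : T e = T f := by rw [he, hf, hT.htr _ hvM' _ hvM]
  rw [← he, ← hf] at hvmax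
  obtain ⟨z, hz, hz1, hz2⟩ := central_cover M (p - e) (q - f) (sub_mem hp.1 heM) hvmax
  have hq1 : IsProjIn M (q - f) := by
    refine ⟨sub_mem hq.1 hfM, ?_, ?_⟩
    · rw [isSelfAdjoint_iff, star_sub, hqsa, hfsa]
    · rw [sub_mul, mul_sub, mul_sub, hqq, hqf, hfq, hff, sub_self, sub_zero]
  have hp1 : IsProjIn M (1 - p) := by
    refine ⟨sub_mem (one_mem M) hp.1, ?_, ?_⟩
    · rw [isSelfAdjoint_iff, star_sub, hpsa, star_one]
    · rw [sub_mul, mul_sub, mul_sub, hpp, one_mul, mul_one, one_mul, sub_self, sub_zero]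
  obtain ⟨w, hwM, hw, hwr, hwl, hwmax⟩ := max_pi M (q - f) (1 - p) hq1 hp1
  have hwM' := star_mem hwM
  have hw' : star w * w * star w = star w := by simpa [mul_assoc] using congr(star $hw)
  have hwr' : (q - f) * star w = star w := by
    simpa [hqsa, hfsa] using congr(star $hwr)
  have hwl' : star w * (1 - p) = star w := by
    simpa [hpsa] using congr(star $hwl)
  obtain ⟨e2, he2⟩ : ∃ e, e = star w * w := ⟨_, rfl⟩
  obtain ⟨f2, hf2⟩ : ∃ f, f = w * star w := ⟨_, rfl⟩
  have he2M : e2 ∈ M := he2 ▸ mul_mem hwM' hwM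
  have hf2M : f2 ∈ M := hf2 ▸ mul_mem hwM hwM'
  have he2sa : star e2 = e2 := by simp [he2]
  have hf2sa : star f2 = f2 := by simp [hf2]
  have he2e2 : e2 * e2 = e2 := by rw [he2, ← mul_assoc, hw']
  have hf2f2 : f2 * f2 = f2 := by rw [hf2, ← mul_assoc, hw]
  have hpw : p * w = 0 := by
    rw [sub_mul, one_mul] at hwl
    exact sub_eq_self.1 hwl
  have hwp : star w * p = 0 := by simpa [hpsa] using congr(star $hpw)
  have hpf2 : p * f2 = 0 := by rw [hf2, ← mul_assoc, hpw, zero_mul]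
  have hf2p : f2 * p = 0 := by rw [hf2, mul_assoc, hwp, mul_zero]
  have hqe2 : (q - f) * e2 = e2 := by rw [he2, ← mul_assoc, hwr']
  have he2q : e2 * (q - f) = e2 := by rw [he2, mul_assoc, hwr]
  have hfe2 : f * e2 = 0 := by
    rw [← hqe2, ← mul_assoc, mul_sub, hfq, hff, sub_self, zero_mul]
  have he2f : e2 * f = 0 := by
    rw [← he2q, mul_assoc, sub_mul, hqf, hff, sub_self, mul_zero]
  have hqe2' : q * e2 = e2 := by rw [sub_mul, hfe2, sub_zero] at hqe2; exact hqe2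
  have he2q' : e2 * q = e2 := by rw [mul_sub, he2f, sub_zero] at he2q; exact he2q
  have hvw : v * w = 0 := by rw [← hvp, mul_assoc, hpw, mul_zero]
  have hwv : w * v = 0 := by
    rw [← hwr, mul_assoc, sub_mul, hqv, hfv, sub_self, mul_zero]
  have hTef2 : T e2 = T f2 := by rw [he2, hf2, hT.htr _ hwM' _ hwM]
  rw [← he2, ← hf2] at hwmax
  obtain ⟨y, hy, hy1, hy2⟩ := central_cover M (q - f - e2) (1 - p - f2)
    (sub_mem hq1.1 he2M) hwmax
  -- central projection 1 - z
  obtain ⟨Z, hZ⟩ : ∃ Z, Z = 1 - z := ⟨_, rfl⟩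
  have hzsa : star z = z := hz.1.2.1
  have hzz : z * z = z := hz.1.2.2
  have hzc := hz.2
  have hZM : Z ∈ M := hZ ▸ sub_mem (one_mem M) hz.1.1
  have hZsa : star Z = Z := by rw [hZ, star_sub, star_one, hzsa]
  have hZZ : Z * Z = Z := by
    rw [hZ, sub_mul, mul_sub, mul_sub, hzz, one_mul, mul_one, one_mul, sub_self, sub_zero]
  have hZc : ∀ x ∈ M, Z * x = x * Z := by
    intro x hx
    rw [hZ, sub_mul, mul_sub, hzc x hx, one_mul, mul_one]
  have hZproj : IsCentralProj M Z := ⟨⟨hZM, hZsa, hZZ⟩, hZc⟩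
  have hzZ : z * Z = 0 := by rw [hZ, mul_sub, hzz, mul_one, sub_self]
  have hZpe : Z * (p - e) = 0 := by rw [hZ, sub_mul, hz1, one_mul, sub_self]
  have hysa : star y = y := hy.1.2.1
  have hyy : y * y = y := hy.1.2.2
  obtain ⟨c, hc⟩ : ∃ c, c = y * Z := ⟨_, rfl⟩
  have hcM : c ∈ M := hc ▸ mul_mem hy.1.1 hZM
  have hcc0 : ∀ x ∈ M, c * x = x * c := by
    intro x hx
    rw [hc, mul_assoc, hZc x hx, ← mul_assoc, hy.2 x hx, mul_assoc]
  have hcproj : IsCentralProj M c := by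
    refine ⟨⟨hcM, ?_, ?_⟩, hcc0⟩
    · rw [isSelfAdjoint_iff, hc, star_mul, hysa, hZsa, hy.2 Z hZM]
    · rw [hc, mul_assoc, ← mul_assoc Z, hZc y hy.1.1, mul_assoc y Z Z, hZZ, ← mul_assoc, hyy]
  -- finiteness step
  have hZd : Z * (q - f - e2) = 0 := by
    obtain ⟨g, hg⟩ : ∃ g, g = 1 - f - e2 := ⟨_, rfl⟩
    have hgM : g ∈ M := hg ▸ sub_mem (sub_mem (one_mem M) hfM) he2M
    have hgsa : star g = g := by rw [hg]; simp [hfsa, he2sa]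
    have hfg : f * g = 0 := by rw [hg, mul_sub, mul_sub, hff, hfe2, mul_one]; simp
    have he2g : e2 * g = 0 := by rw [hg, mul_sub, mul_sub, he2e2, he2f, mul_one]; simp
    have hgg : g * g = g := by
      nth_rw 1 [hg]
      rw [sub_mul, sub_mul, hfg, he2g, one_mul, sub_zero, sub_zero]
    have hgd : g * (q - f - e2) = q - f - e2 := by
      rw [hg, sub_mul, sub_mul, mul_sub f, mul_sub f, mul_sub e2, mul_sub e2, hfq, hff, hfe2,
        he2q', he2f, he2e2, one_mul]
      simp
    have hTg : T (c * g) = 0 := by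
      have h1 : T g = T (1 - e - f2) := by
        rw [hg, hT.sub (sub_mem (one_mem M) hfM) he2M, hT.sub (one_mem M) hfM,
          hT.sub (sub_mem (one_mem M) heM) hf2M, hT.sub (one_mem M) heM, hTef, hTef2]
      have h2 : c * (1 - e - f2) = 0 := by
        have h3 : (1 - e - f2) = (1 - p - f2) + (p - e) := by abel
        have hfM2 : 1 - p - f2 ∈ M := sub_mem hp1.1 hf2M
        rw [h3, mul_add, hcc0 _ hfM2]
        rw [hc, ← mul_assoc, hy2, zero_mul, mul_assoc, hZpe, mul_zero, add_zero]
      rw [hT.hmod c g hgM hcproj, h1, ← hT.hmod c _ (sub_mem (sub_mem (one_mem M) heM) hf2M) hcproj,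
        h2]
      have := hT.hsmul 0 0 (zero_mem M)
      simpa using this
    have hcg : c * g = 0 := by
      refine hT.hfaithful _ (mul_mem hcM hgM) (isPositive_of_proj ?_ ?_) hTg
      · rw [star_mul, hgsa, hcproj.1.2.1, hcc0 g hgM]
      · rw [mul_assoc, ← mul_assoc g, ← hcc0 g hgM, mul_assoc c g g, hgg, ← mul_assoc,
          hcproj.1.2.2]
    have hcd : c * (q - f - e2) = 0 := by rw [← hgd, ← mul_assoc, hcg, zero_mul]
    rw [hc, mul_assoc, hZc _ (sub_mem hq1.1 he2M), ← mul_assoc, hy1] at hcd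
    rw [hZc _ (sub_mem hq1.1 he2M), hcd]
  obtain ⟨u, hu⟩ : ∃ u, u = star v + Z * w := ⟨_, rfl⟩
  have huM : u ∈ M := hu ▸ add_mem hvM' (mul_mem hZM hwM)
  have hsu : star u = v + star w * Z := by rw [hu]; simp [hZsa]
  have hfe : f + Z * e2 = q := by
    have h1 : Z * e2 = Z * (q - f) := by
      rw [mul_sub, sub_eq_zero] at hZd
      exact hZd.symm
    rw [h1, hZ, sub_mul, hzc _ hq1.1, hz2]
    simp
  have huu : star u * u = q := by
    have e1 : v * (Z * w) = 0 := by rw [← mul_assoc, ← hZc v hvM, mul_assoc, hvw, mul_zero]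
    have e2' : star w * Z * star v = 0 := by
      have : star w * star v = 0 := by rw [← star_mul, hvw, star_zero]
      rw [← hZc _ hwM', mul_assoc, this, mul_zero]
    have e3 : star w * Z * (Z * w) = Z * e2 := by
      rw [mul_assoc, ← mul_assoc Z Z, hZZ, ← mul_assoc, ← hZc _ hwM', mul_assoc, he2]
    rw [hsu, hu, add_mul, mul_add, mul_add, e1, e2', e3, ← hf, add_zero, zero_add, hfe]
  have huu' : u * star u = e + Z * f2 := by
    have e1 : star v * (star w * Z) = 0 := by
      have : star v * star w = 0 := by rw [← star_mul, hwv, star_zero]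
      rw [← mul_assoc, this, zero_mul]
    have e2' : Z * w * v = 0 := by rw [mul_assoc, hwv, mul_zero]
    have e3 : Z * w * (star w * Z) = Z * f2 := by
      rw [← hZc _ hwM', ← mul_assoc, hZc w hwM, mul_assoc w Z Z, hZZ, ← hZc w hwM, mul_assoc, hf2]
    rw [hsu, hu, add_mul, mul_add, mul_add, e1, e2', e3, ← he, add_zero, zero_add]
  have huuu : u * star u * u = u := by
    have h1 : star w * w * star w = star w := hw'
    rw [mul_assoc, huu, hu, add_mul, hvq, mul_assoc]
    have : w * q = w := by
      have hwf : w * f = 0 := by rw [hf, ← mul_assoc, hwv, zero_mul]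
      rw [mul_sub, hwf, sub_zero] at hwr
      exact hwr
    rw [this]
  refine ⟨u * star u, ⟨mul_mem huM (star_mem huM), ?_, ?_⟩, ⟨u, huM, huu, rfl⟩, z, hz, ?_⟩
  · rw [isSelfAdjoint_iff]; simp
  · rw [← mul_assoc, huuu]
  · have hZf2M : Z * f2 ∈ M := mul_mem hZM hf2M
    have hef2 : e * f2 = 0 := by rw [← hep, mul_assoc, hpf2, mul_zero]
    have hf2e : f2 * e = 0 := by rw [← hpe, ← mul_assoc, hf2p, zero_mul]
    have hZf2sq : Z * f2 * (Z * f2) = Z * f2 := by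
      rw [mul_assoc, ← mul_assoc f2, ← hZc f2 hf2M, mul_assoc Z f2 f2, hf2f2, ← mul_assoc, hZZ]
    have hpep : (p - e) * (p - e) = p - e := by
      rw [sub_mul, mul_sub, mul_sub, hpp, hpe, hep, hee, sub_self, sub_zero]
    have hx1 : Z * f2 * (p - e) = 0 := by
      rw [mul_assoc, mul_sub, hf2p, hf2e, sub_self, mul_zero]
    have hx2 : (p - e) * (Z * f2) = 0 := by
      rw [hZc f2 hf2M, ← mul_assoc, sub_mul, hpf2, hef2, sub_self, zero_mul]
    have hsq : (u * star u - p) * (u * star u - p) = Z * f2 + (p - e) := by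
      have : u * star u - p = Z * f2 - (p - e) := by rw [huu']; abel
      rw [this, sub_mul, mul_sub (Z * f2) (Z * f2) (p - e), mul_sub (p - e) (Z * f2) (p - e),
        hZf2sq, hx1, hx2, hpep]
      abel
    refine ⟨?_, ?_⟩
    rotate_left
    · rw [hsq, add_mul, mul_add (Z * f2) (Z * f2) (p - e), mul_add (p - e) (Z * f2) (p - e),
        hZf2sq, hx1, hx2, hpep, add_zero, zero_add]
    have hTq : T q = T e + Z * T f2 := by
      rw [← hfe, hT.hadd _ _ hfM (mul_mem hZM he2M), hT.hmod Z _ he2M hZproj, ← hTef, hTef2]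
    have hTpe : z * (T p - T e) = T p - T e := by
      rw [← hT.sub hp.1 heM, ← hT.hmod z _ (sub_mem hp.1 heM) hz, hz1]
    rw [hsq, hT.hadd _ _ hZf2M (sub_mem hp.1 heM), hT.hmod Z _ hf2M hZproj, hT.sub hp.1 heM, hTq]
    have h5 : T p - (T e + Z * T f2) = (T p - T e) - Z * T f2 := by abel
    rw [h5, mul_sub z, hTpe, ← mul_assoc, hzZ, zero_mul]
    abel

theorem cauchy_sel (S : ℕ → Set H) (hne : ∀ k, (S k).Nonempty)
    (hconv : ∀ k, ∀ x ∈ S k, ∀ y ∈ S k, (1 / 2 : ℝ) • (x + y) ∈ S k) (hanti : Antitone S)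
    (B : ℝ) (hb : ∀ k, ∀ x ∈ S k, ‖x‖ ^ 2 ≤ B) :
    ∃ v : ℕ → H, (∀ k, v k ∈ S k) ∧ CauchySeq v := by
  let m : ℕ → ℝ := fun k => sInf ((fun x : H => ‖x‖ ^ 2) '' S k)
  have hbdd : ∀ k, BddBelow ((fun x : H => ‖x‖ ^ 2) '' S k) := fun k =>
    ⟨0, by rintro _ ⟨x, _, rfl⟩; positivity⟩
  have hmle : ∀ k, ∀ x ∈ S k, m k ≤ ‖x‖ ^ 2 := fun k x hx => csInf_le (hbdd k) ⟨x, hx, rfl⟩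
  have hmono : Monotone m := fun i j hij =>
    csInf_le_csInf (hbdd i) ((hne j).image _) (Set.image_mono (hanti hij))
  have hmB : BddAbove (Set.range m) := by
    refine ⟨B, ?_⟩
    rintro _ ⟨k, rfl⟩
    obtain ⟨x, hx⟩ := hne k
    exact (hmle k x hx).trans (hb k x hx)
  obtain ⟨L, hL⟩ : ∃ L, L = ⨆ k, m k := ⟨_, rfl⟩
  have hlim : Tendsto m atTop (𝓝 L) := hL ▸ tendsto_atTop_ciSup hmono hmB
  have hmL : ∀ k, m k ≤ L := fun k => hL ▸ le_ciSup hmB k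
  have hex : ∀ k, ∃ x ∈ S k, ‖x‖ ^ 2 < m k + 1 / ((k : ℝ) + 1) := by
    intro k
    have : sInf ((fun x : H => ‖x‖ ^ 2) '' S k) < m k + 1 / ((k : ℝ) + 1) := by
      have : (0 : ℝ) < 1 / ((k : ℝ) + 1) := by positivity
      exact lt_add_of_pos_right _ this
    obtain ⟨_, ⟨x, hx, rfl⟩, h⟩ := exists_lt_of_csInf_lt ((hne k).image _) this
    exact ⟨x, hx, h⟩
  choose v hv hvm using hex
  refine ⟨v, hv, ?_⟩
  refine cauchySeq_of_le_tendsto_0'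
    (fun k => Real.sqrt (2 * (L - m k) + 4 * (1 / ((k : ℝ) + 1)))) ?_ ?_
  · intro k j hkj
    apply Real.le_sqrt_of_sq_le
    have h1 := hmle k _ (hconv k _ (hv k) _ (hanti hkj (hv j)))
    have h2 := parallelogram_law_with_norm ℂ (v k) (v j)
    have h3 := hvm k
    have h4 := hvm j
    have h5 := hmL j
    have h6 : 1 / ((j : ℝ) + 1) ≤ 1 / ((k : ℝ) + 1) := by
      apply one_div_le_one_div_of_le
      · positivity
      · have : (k : ℝ) ≤ j := by exact_mod_cast hkj
        linarith
    rw [norm_smul, mul_pow] at h1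
    norm_num at h1
    rw [dist_eq_norm]
    norm_num at h3 h4 h6 ⊢
    nlinarith
  · have h1 : Tendsto (fun k => 2 * (L - m k) + 4 * (1 / ((k : ℝ) + 1))) atTop
        (𝓝 (2 * (L - L) + 4 * 0)) :=
      ((tendsto_const_nhds.sub hlim).const_mul 2).add
        (tendsto_one_div_add_atTop_nhds_zero_nat.const_mul 4)
    have h2 := (Real.continuous_sqrt.tendsto _).comp h1
    simpa [Function.comp_def] using h2

theorem isPositive_of_tendsto {y : ℕ → H →L[ℂ] H} {x : H →L[ℂ] H}
    (hy : ∀ k, (y k).IsPositive) (h : ∀ η, Tendsto (fun k => y k η) atTop (𝓝 (x η))) :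
    x.IsPositive := by
  rw [ContinuousLinearMap.isPositive_def]
  refine ⟨?_, ?_⟩
  · intro a b
    have h1 : Tendsto (fun k => inner ℂ (y k a) b) atTop (𝓝 (inner ℂ (x a) b)) :=
      (h a).inner tendsto_const_nhds
    have h2 : Tendsto (fun k => inner ℂ a (y k b)) atTop (𝓝 (inner ℂ a (x b))) :=
      tendsto_const_nhds.inner (h b)
    refine tendsto_nhds_unique h1 (h2.congr fun k => ?_)
    exact ((hy k).inner_left_eq_inner_right a b).symm
  · intro a
    have h1 : Tendsto (fun k => inner ℂ (y k a) a) atTop (𝓝 (inner ℂ (x a) a)) :=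
      (h a).inner tendsto_const_nhds
    have h2 := (Complex.continuous_re.tendsto _).comp h1
    exact ge_of_tendsto' h2 fun k => (hy k).re_inner_nonneg_left a

theorem limit_exists (M : VonNeumannAlgebra H) (ξ : H) (y : ℕ → H →L[ℂ] H)
    (hyM : ∀ k, y k ∈ M) (hy1 : ∀ k, ‖y k‖ ≤ 1) (hc : CauchySeq fun k => y k ξ) :
    ∃ P x : H →L[ℂ] H, IsProjIn M P ∧ P ξ = ξ ∧ x ∈ M ∧
      ∀ η, Tendsto (fun k => (P * y k * P) η) atTop (𝓝 (x η)) := by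
  let K : Submodule ℂ H := (Submodule.span ℂ {η | ∃ m ∈ M.commutant, η = m ξ}).topologicalClosure
  have hinv : ∀ m ∈ M.commutant, ∀ k ∈ K, m k ∈ K := by
    intro m hm
    have : K ≤ K.comap (m : H →ₗ[ℂ] H) := by
      apply Submodule.topologicalClosure_minimal
      · rw [Submodule.span_le]
        rintro _ ⟨m', hm', rfl⟩
        exact Submodule.le_topologicalClosure _
          (Submodule.subset_span ⟨m * m', mul_mem hm hm', rfl⟩)
      · exact (Submodule.isClosed_topologicalClosure _).preimage m.continuous
    exact this
  have hP := vna_proj_isProjIn M K hinv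
  have hξK : ξ ∈ K := Submodule.le_topologicalClosure _
    (Submodule.subset_span ⟨1, one_mem _, rfl⟩)
  let W : Submodule ℂ H :=
    { carrier := {η | CauchySeq fun k => y k η}
      add_mem' := by
        intro a b ha hb
        have : CauchySeq fun k => y k a + y k b := CauchySeq.add ha hb
        simpa using this
      zero_mem' := by
        have : CauchySeq fun _ : ℕ => (0 : H) := cauchySeq_const 0
        simpa using this
      smul_mem' := by
        intro c a ha
        have : CauchySeq fun k => c • y k a :=
          (uniformContinuous_const_smul c).comp_cauchySeq ha
        simpa using this }
  have hWc : IsClosed (W : Set H) := by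
    rw [← closure_subset_iff_isClosed]
    intro η hη
    change CauchySeq fun k => y k η
    rw [Metric.cauchySeq_iff]
    intro ε hε
    obtain ⟨η', hη', hd⟩ := Metric.mem_closure_iff.1 hη (ε / 3) (by positivity)
    have hη'' : CauchySeq fun k => y k η' := hη'
    obtain ⟨N, hN⟩ := Metric.cauchySeq_iff.1 hη'' (ε / 3) (by positivity)
    refine ⟨N, fun a ha b hb => ?_⟩
    have h1 : ∀ k, dist (y k η) (y k η') < ε / 3 := by
      intro k
      rw [dist_eq_norm, ← map_sub]
      refine lt_of_le_of_lt ?_ hd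
      rw [dist_eq_norm]
      simpa using (y k).le_of_opNorm_le (hy1 k) (η - η')
    have h2 := hN a ha b hb
    have h3 := dist_triangle4 (y a η) (y a η') (y b η') (y b η)
    have h4 := h1 a
    have h5 := h1 b
    rw [dist_comm] at h5
    linarith
  have hKW : K ≤ W := by
    apply Submodule.topologicalClosure_minimal _ _ hWc
    rw [Submodule.span_le]
    rintro _ ⟨m, hm, rfl⟩
    change CauchySeq fun k => y k (m ξ)
    have : CauchySeq fun k => m (y k ξ) :=
      hc.map m.uniformContinuous
    have h2 : ∀ k, y k (m ξ) = m (y k ξ) := fun k => congr($(vna_comm_of_mem (hyM k) hm) ξ)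
    simpa only [h2] using this
  obtain ⟨P, hPK⟩ : ∃ P, P = K.starProjection := ⟨_, rfl⟩
  rw [← hPK] at hP
  have hlim : ∀ η, ∃ l, Tendsto (fun k => (P * y k * P) η) atTop (𝓝 l) := by
    intro η
    have h1 : P η ∈ W := hKW (hPK ▸ Submodule.starProjection_apply_mem K η)
    have h2 : CauchySeq fun k => y k (P η) := h1
    have h3 : CauchySeq fun k => P (y k (P η)) := h2.map P.uniformContinuous
    exact cauchySeq_tendsto_of_complete h3
  choose f hf using hlim
  let x : H →L[ℂ] H := continuousLinearMapOfTendsto (fun k => P * y k * P) (f := f)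
    (tendsto_pi_nhds.2 hf)
  have hx : ∀ η, Tendsto (fun k => (P * y k * P) η) atTop (𝓝 (x η)) := hf
  refine ⟨P, x, hP, ?_, ?_, hx⟩
  · rw [hPK]
    exact Submodule.starProjection_eq_self_iff.2 hξK
  · apply vna_mem_of_comm
    intro m hm
    ext η
    have h1 : Tendsto (fun k => m ((P * y k * P) η)) atTop (𝓝 (m (x η))) :=
      (m.continuous.tendsto _).comp (hx η)
    have h2 := hx (m η)
    have h3 : ∀ k, (P * y k * P) (m η) = m ((P * y k * P) η) := fun k =>
      congr($(vna_comm_of_mem (mul_mem (mul_mem hP.1 (hyM k)) hP.1) hm) η)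
    simp only [h3] at h2
    exact tendsto_nhds_unique h1 h2

theorem apply_eq_zero_of_re_inner {A : H →L[ℂ] H} (hA : A.IsPositive) {ξ : H}
    (h : (inner ℂ (A ξ) ξ).re = 0) : A ξ = 0 := by
  have h0 : 0 ≤ A := (ContinuousLinearMap.nonneg_iff_isPositive A).2 hA
  obtain ⟨b, hb⟩ := CStarAlgebra.nonneg_iff_eq_star_mul_self.1 h0
  have h1 : inner ℂ (A ξ) ξ = inner ℂ (b ξ) (b ξ) := by
    have : A ξ = adjoint b (b ξ) := by rw [hb]; rfl
    rw [this, adjoint_inner_left]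
  rw [h1, inner_self_eq_norm_sq_to_K] at h
  have h2 : ‖b ξ‖ = 0 := by
    have : ‖b ξ‖ ^ 2 = 0 := by exact_mod_cast h
    exact pow_eq_zero_iff (two_ne_zero) |>.1 this
  have h3 : b ξ = 0 := norm_eq_zero.1 h2
  have : A ξ = adjoint b (b ξ) := by rw [hb]; rfl
  rw [this, h3, map_zero]

theorem conj_pos {a P : H →L[ℂ] H} (ha : a.IsPositive) (hP : star P = P) :
    (P * a * P).IsPositive := by
  have := ha.conj_adjoint P
  rw [← star_eq_adjoint, hP] at this
  rw [mul_assoc]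
  exact this

theorem lemmaA (M : VonNeumannAlgebra H) (T : (H →L[ℂ] H) → H →L[ℂ] H) (hT : CTrace M T)
    (hcont : ∀ (ι : Type u) (l : Filter ι) (x : ι → H →L[ℂ] H) (x' : H →L[ℂ] H) (C : ℝ),
      (∀ α, x α ∈ M ∧ ‖x α‖ ≤ C) → x' ∈ M →
      (∀ ξ : H, Filter.Tendsto (fun α => x α ξ) l (nhds (x' ξ))) →
      ∀ ξ : H, Filter.Tendsto (fun α => T (x α) ξ) l (nhds (T x' ξ)))
    (ξ : H) (ε : ℝ) (hε : 0 < ε) :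
    ∃ δ > 0, ∀ y ∈ M, y.IsPositive → ‖y‖ ≤ 1 → (inner ℂ (T y ξ) ξ).re < δ →
      (inner ℂ (y ξ) ξ).re < ε := by
  by_contra hcon
  push Not at hcon
  let C : ℕ → Set (H →L[ℂ] H) := fun k => {y | y ∈ M ∧ y.IsPositive ∧ ‖y‖ ≤ 1 ∧
    (inner ℂ (T y ξ) ξ).re ≤ 1 / ((k : ℝ) + 1) ∧ ε ≤ (inner ℂ (y ξ) ξ).re}
  let S : ℕ → Set H := fun k => (fun y : H →L[ℂ] H => y ξ) '' C k
  have hS := cauchy_sel S ?_ ?_ ?_ (‖ξ‖ ^ 2) ?_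
  rotate_left
  · intro k
    obtain ⟨y, h1, h2, h3, h4, h5⟩ := hcon (1 / ((k : ℝ) + 1)) (by positivity)
    exact ⟨_, y, ⟨h1, h2, h3, h4.le, h5⟩, rfl⟩
  · rintro k _ ⟨a, ⟨a1, a2, a3, a4, a5⟩, rfl⟩ _ ⟨b, ⟨b1, b2, b3, b4, b5⟩, rfl⟩
    refine ⟨(1 / 2 : ℂ) • (a + b), ⟨vna_smul_mem _ (add_mem a1 b1),
      (a2.add b2).smul_of_nonneg (RCLike.nonneg_iff.2 (by norm_num)), ?_, ?_, ?_⟩, ?_⟩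
    · rw [norm_smul]
      have := norm_add_le a b
      norm_num
      linarith
    · rw [hT.hsmul _ _ (add_mem a1 b1), hT.hadd _ _ a1 b1]
      have : inner ℂ (((1 / 2 : ℂ) • (T a + T b)) ξ) ξ
          = (1 / 2 : ℂ) * (inner ℂ (T a ξ) ξ + inner ℂ (T b ξ) ξ) := by
        rw [smul_apply, add_apply, inner_smul_left, inner_add_left]
        simp [Complex.conj_ofNat]
      rw [this, show (1 / 2 : ℂ) = ((1 / 2 : ℝ) : ℂ) by norm_num, Complex.re_ofReal_mul,
        Complex.add_re]
      linarith
    · have : inner ℂ (((1 / 2 : ℂ) • (a + b)) ξ) ξ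
          = (1 / 2 : ℂ) * (inner ℂ (a ξ) ξ + inner ℂ (b ξ) ξ) := by
        rw [smul_apply, add_apply, inner_smul_left, inner_add_left]
        simp [Complex.conj_ofNat]
      rw [this, show (1 / 2 : ℂ) = ((1 / 2 : ℝ) : ℂ) by norm_num, Complex.re_ofReal_mul,
        Complex.add_re]
      linarith
    · change (1 / 2 : ℂ) • (a ξ + b ξ) = (1 / 2 : ℝ) • (a ξ + b ξ)
      rw [show (1 / 2 : ℂ) = ((1 / 2 : ℝ) : ℂ) by norm_num, Complex.coe_smul]
  · intro i j hij
    apply Set.image_mono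
    rintro y ⟨h1, h2, h3, h4, h5⟩
    refine ⟨h1, h2, h3, h4.trans ?_, h5⟩
    apply one_div_le_one_div_of_le
    · positivity
    · have : (i : ℝ) ≤ j := by exact_mod_cast hij
      linarith
  · rintro k _ ⟨y, ⟨h1, h2, h3, h4, h5⟩, rfl⟩
    have : ‖y ξ‖ ≤ ‖ξ‖ := by simpa using y.le_of_opNorm_le h3 ξ
    exact pow_le_pow_left₀ (norm_nonneg _) this 2
  obtain ⟨v, hv, hvc⟩ := hS
  choose y hyC hyv using hv
  have hyv' : v = fun k => y k ξ := funext fun k => (hyv k).symm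
  rw [hyv'] at hvc
  obtain ⟨P, x, hP, hPξ, hxM, hx⟩ := limit_exists M ξ y (fun k => (hyC k).1)
    (fun k => (hyC k).2.2.1) hvc
  have hPsa : star P = P := hP.2.1
  have hPP : P * P = P := hP.2.2
  have hPn : ‖P‖ ≤ 1 := norm_le_one_of_pi (by rw [hPsa, hPP, hPP])
  have hxpos : x.IsPositive := isPositive_of_tendsto (fun k => conj_pos (hyC k).2.1 hPsa) hx
  -- the trace of the compressions
  have hPM := hP.1
  have hQM : 1 - P ∈ M := sub_mem (one_mem M) hPM
  have hQsa : star (1 - P) = 1 - P := by rw [star_sub, star_one, hPsa]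
  have hQQ : (1 - P) * (1 - P) = 1 - P := by
    rw [sub_mul, mul_sub, mul_sub, hPP, one_mul, mul_one, one_mul, sub_self, sub_zero]
  have htr : ∀ k, (inner ℂ (T (P * y k * P) ξ) ξ).re ≤ 1 / ((k : ℝ) + 1) := by
    intro k
    have hyM := (hyC k).1
    have h1 : T (P * y k * P) = T (P * y k) := by
      rw [hT.htr _ (mul_mem hPM hyM) _ hPM, ← mul_assoc, hPP]
    have h2 : T ((1 - P) * y k * (1 - P)) = T ((1 - P) * y k) := by
      rw [hT.htr _ (mul_mem hQM hyM) _ hQM, ← mul_assoc, hQQ]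
    have h3 : T (y k) = T (P * y k * P) + T ((1 - P) * y k * (1 - P)) := by
      rw [h1, h2, ← hT.hadd _ _ (mul_mem hPM hyM) (mul_mem hQM hyM)]
      congr 1
      rw [sub_mul, one_mul]; abel
    have h4 := (hT.hpos _ (mul_mem (mul_mem hQM hyM) hQM)
      (conj_pos (hyC k).2.1 hQsa)).re_inner_nonneg_left ξ
    have h5 := (hyC k).2.2.2.1
    rw [h3, add_apply, inner_add_left, Complex.add_re] at h5
    have h6 : 0 ≤ (inner ℂ (T ((1 - P) * y k * (1 - P)) ξ) ξ).re := h4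
    linarith
  have hTx : Tendsto (fun k => T (P * y k * P) ξ) atTop (𝓝 (T x ξ)) := by
    have h := hcont (ULift.{u} ℕ) (Filter.map ULift.up atTop) (fun k => P * y k.down * P) x 1
      ?_ hxM ?_ ξ
    · exact h
    · intro k
      refine ⟨mul_mem (mul_mem hPM (hyC _).1) hPM, ?_⟩
      have h1 := norm_mul_le (P * y k.down) P
      have h2 := norm_mul_le P (y k.down)
      have h3 := (hyC k.down).2.2.1
      have h4 := norm_nonneg P
      have h5 := norm_nonneg (y k.down)
      have h6 := norm_nonneg (P * y k.down)
      nlinarith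
    · exact hx
  have hTxpos := hT.hpos x hxM hxpos
  have hφ : (inner ℂ (T x ξ) ξ).re = 0 := by
    apply le_antisymm
    · have h1 : Tendsto (fun k => inner ℂ (T (P * y k * P) ξ) ξ) atTop
          (𝓝 (inner ℂ (T x ξ) ξ)) := hTx.inner tendsto_const_nhds
      have h2 := (Complex.continuous_re.tendsto _).comp h1
      exact le_of_tendsto_of_tendsto' h2 tendsto_one_div_add_atTop_nhds_zero_nat htr
    · exact hTxpos.re_inner_nonneg_left ξ
  have hTxξ : T x ξ = 0 := apply_eq_zero_of_re_inner hTxpos hφ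
  -- central projection onto the kernel
  obtain ⟨A, hA⟩ : ∃ A, A = T x := ⟨_, rfl⟩
  have hAM := hT.hmem x hxM
  rw [← hA] at hAM hTxξ hTxpos
  let K : Submodule ℂ H := A.ker
  have : CompleteSpace K := A.isClosed_ker.completeSpace_coe
  have hinv : ∀ m : H →L[ℂ] H, A * m = m * A → ∀ k ∈ K, m k ∈ K := by
    intro m hm k hk
    have h1 : A k = 0 := hk
    have h2 : A (m k) = m (A k) := congr($hm k)
    change A (m k) = 0
    rw [h2, h1, map_zero]
  obtain ⟨z, hz⟩ : ∃ z, z = K.starProjection := ⟨_, rfl⟩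
  have hzP : IsProjIn M z := hz ▸ vna_proj_isProjIn M K fun m hm =>
    hinv m (vna_comm_of_mem hAM.1 hm)
  have hzP' : IsProjIn M.commutant z := hz ▸ vna_proj_isProjIn M.commutant K fun m hm =>
    hinv m (hAM.2 m (by rwa [VonNeumannAlgebra.commutant_commutant] at hm))
  have hzc : IsCentralProj M z := ⟨hzP, fun a ha => (vna_comm_of_mem ha hzP'.1).symm⟩
  have hzξ : z ξ = ξ := by
    rw [hz]
    exact Submodule.starProjection_eq_self_iff.2 hTxξ
  have hAz : A * z = 0 := by
    ext η
    have : z η ∈ K := hz ▸ Submodule.starProjection_apply_mem K η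
    exact this
  have hTzx : T (z * x) = 0 := by
    rw [hT.hmod z x hxM hzc, ← hA, hzc.2 A hAM.1, hAz]
  have hzx : z * x = 0 := by
    refine hT.hfaithful _ (mul_mem hzP.1 hxM) ?_ hTzx
    have : z * x = z * x * z := by
      rw [mul_assoc, ← hzc.2 x hxM, ← mul_assoc, hzP.2.2]
    rw [this]
    exact conj_pos hxpos hzP.2.1
  have hxξ : x ξ = 0 := by
    have h1 : x * z = 0 := by rw [← hzc.2 x hxM, hzx]
    have h2 : x (z ξ) = 0 := congr($h1 ξ)
    rwa [hzξ] at h2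
  have hfin : ε ≤ (inner ℂ (x ξ) ξ).re := by
    have h1 : Tendsto (fun k => inner ℂ ((P * y k * P) ξ) ξ) atTop
          (𝓝 (inner ℂ (x ξ) ξ)) := (hx ξ).inner tendsto_const_nhds
    have h2 := (Complex.continuous_re.tendsto _).comp h1
    refine ge_of_tendsto' h2 fun k => ?_
    have h3 : inner ℂ ((P * y k * P) ξ) ξ = inner ℂ (y k ξ) ξ := by
      change inner ℂ (P (y k (P ξ))) ξ = _
      rw [hPξ, ← adjoint_inner_right, ← star_eq_adjoint, hPsa, hPξ]
    change ε ≤ (inner ℂ ((P * y k * P) ξ) ξ).re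
    rw [h3]
    exact (hyC k).2.2.2.2
  rw [hxξ] at hfin
  simp at hfin
  linarith

theorem projSet_tendsto {M : VonNeumannAlgebra H} {ι : Type*} {l : Filter ι} {q : ι → ProjSet M}
    {p : ProjSet M} :
    Tendsto q l (𝓝 p) ↔ ∀ ξ : H, Tendsto (fun α => (q α).1 ξ) l (𝓝 (p.1 ξ)) := by
  have hind : IsInducing (fun p : ProjSet M => (fun ξ => p.1 ξ : H → H)) := ⟨rfl⟩
  rw [hind.tendsto_nhds_iff, tendsto_pi_nhds]
  rfl

theorem proj_norm_le {p : H →L[ℂ] H} (h1 : star p = p) (h2 : p * p = p) : ‖p‖ ≤ 1 :=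
  norm_le_one_of_pi (by rw [h1, h2, h2])

theorem part_one (M : VonNeumannAlgebra H) (T : (H →L[ℂ] H) → H →L[ℂ] H) (hT : CTrace M T)
    (hcont : ∀ (ι : Type u) (l : Filter ι) (x : ι → H →L[ℂ] H) (x' : H →L[ℂ] H) (C : ℝ),
      (∀ α, x α ∈ M ∧ ‖x α‖ ≤ C) → x' ∈ M →
      (∀ ξ : H, Filter.Tendsto (fun α => x α ξ) l (nhds (x' ξ))) →
      ∀ ξ : H, Filter.Tendsto (fun α => T (x α) ξ) l (nhds (T x' ξ)))
    {ι : Type*} (l : Filter ι) (pα : ι → ProjSet M) (p : ProjSet M)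
    (h : ∀ ξ : H, Filter.Tendsto (fun α => T (pα α).1 ξ) l (nhds (T p.1 ξ))) :
    Filter.Tendsto (fun α => pquotMk M (pα α)) l (nhds (pquotMk M p)) := by
  have hex := fun α => compare M T hT p.1 (pα α).1 p.2 (pα α).2
  choose q hq hpq z hz hTq hqq using hex
  let Q : ι → ProjSet M := fun α => ⟨q α, hq α⟩
  have hmk : ∀ α, pquotMk M (pα α) = pquotMk M (Q α) := fun α => Quot.sound (hpq α)
  simp only [hmk]
  have hcq : Continuous (pquotMk M) := continuous_quot_mk
  refine (hcq.tendsto p).comp (projSet_tendsto.2 fun ξ => ?_)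
  change Tendsto (fun α => q α ξ) l (𝓝 (p.1 ξ))
  have hsa : ∀ α, star (q α - p.1) = q α - p.1 := fun α => by
    rw [star_sub, show star (q α) = q α from (hq α).2.1, show star p.1 = p.1 from p.2.2.1]
  have hdM : ∀ α, q α - p.1 ∈ M := fun α => sub_mem (hq α).1 p.2.1
  have hdsa : ∀ α, star ((q α - p.1) * (q α - p.1)) = (q α - p.1) * (q α - p.1) := fun α => by
    rw [star_mul, hsa]
  have hsmall : Tendsto (fun α => ‖T p.1 ξ - T (pα α).1 ξ‖) l (𝓝 0) := by
    have := (tendsto_const_nhds (x := T p.1 ξ)).sub (h ξ)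
    rw [sub_self] at this
    simpa using this.norm
  rw [Metric.tendsto_nhds]
  intro ε hε
  obtain ⟨δ, hδ, hA⟩ := lemmaA M T hT hcont ξ (ε ^ 2) (by positivity)
  have hev : ∀ᶠ α in l, 3 * ‖T p.1 ξ - T (pα α).1 ξ‖ * ‖ξ‖ < δ := by
    have h1 := (hsmall.const_mul 3).mul_const ‖ξ‖
    rw [mul_zero, zero_mul] at h1
    exact h1.eventually_lt_const hδ
  filter_upwards [hev] with α hα
  have hre : (inner ℂ (T ((q α - p.1) * (q α - p.1)) ξ) ξ).re < δ := by
    refine lt_of_le_of_lt ?_ hα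
    refine (Complex.re_le_norm _).trans ((norm_inner_le_norm _ _).trans ?_)
    refine mul_le_mul_of_nonneg_right ?_ (norm_nonneg _)
    obtain ⟨w, hw⟩ : ∃ w, w = T p.1 ξ - T (pα α).1 ξ := ⟨_, rfl⟩
    have e1 : T ((q α - p.1) * (q α - p.1)) ξ = z α w + z α w - w := by
      rw [hTq, hw]; rfl
    have hzn : ‖z α w‖ ≤ ‖w‖ := by
      simpa using (z α).le_of_opNorm_le (proj_norm_le (hz α).1.2.1 (hz α).1.2.2) w
    rw [e1, ← hw]
    have := norm_sub_le (z α w + z α w) w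
    have := norm_add_le (z α w) (z α w)
    linarith
  have hlt := hA _ (mul_mem (hdM α) (hdM α)) (isPositive_of_proj (hdsa α) (hqq α))
    (proj_norm_le (hdsa α) (hqq α)) hre
  have e2 : inner ℂ (((q α - p.1) * (q α - p.1)) ξ) ξ
      = inner ℂ ((q α - p.1) ξ) ((q α - p.1) ξ) := by
    change inner ℂ ((q α - p.1) ((q α - p.1) ξ)) ξ = _
    rw [← adjoint_inner_right, ← star_eq_adjoint, hsa]
  rw [e2, inner_self_eq_norm_sq_to_K] at hlt
  have e3 : ‖(q α - p.1) ξ‖ ^ 2 < ε ^ 2 := by exact_mod_cast hlt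
  rw [dist_eq_norm]
  exact lt_of_pow_lt_pow_left₀ 2 hε.le e3
/-- Let `M` be finite with center-valued trace `T`.  For nets of
projections, `T p_α → T p` strongly iff `[p_α] → [p]` in the quotient operator topology;
hence `T` induces a homeomorphism (an injective inducing map) of `(P(M)/∼, QOT)` onto a
subspace of the positive unit ball of the center with the strong topology. -/
theorem centerTrace_embedding (M : VonNeumannAlgebra H)
    (hfin : FiniteProj M (1 : H →L[ℂ] H))
    (T : (H →L[ℂ] H) → H →L[ℂ] H)
    (hmem : ∀ x ∈ M, T x ∈ M ∧ ∀ y ∈ M, T x * y = y * T x)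
    (hadd : ∀ x y, x ∈ M → y ∈ M → T (x + y) = T x + T y)
    (hsmul : ∀ (c : ℂ) (x : H →L[ℂ] H), x ∈ M → T (c • x) = c • T x)
    (hone : T 1 = 1)
    (htr : ∀ x ∈ M, ∀ y ∈ M, T (x * y) = T (y * x))
    (hpos : ∀ x, x ∈ M → x.IsPositive → (T x).IsPositive)
    (hfaithful : ∀ x, x ∈ M → x.IsPositive → T x = 0 → x = 0)
    (hmod : ∀ z x, x ∈ M → IsCentralProj M z → T (z * x) = z * T x)
    (hcont : ∀ (ι : Type u) (l : Filter ι) (x : ι → H →L[ℂ] H) (x' : H →L[ℂ] H) (C : ℝ),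
      (∀ α, x α ∈ M ∧ ‖x α‖ ≤ C) → x' ∈ M →
      (∀ ξ : H, Filter.Tendsto (fun α => x α ξ) l (nhds (x' ξ))) →
      ∀ ξ : H, Filter.Tendsto (fun α => T (x α) ξ) l (nhds (T x' ξ))) :
    (∀ (ι : Type u) (l : Filter ι) (pα : ι → ProjSet M) (p : ProjSet M),
      (∀ ξ : H, Filter.Tendsto (fun α => T (pα α).1 ξ) l (nhds (T p.1 ξ))) →
      Filter.Tendsto (fun α => pquotMk M (pα α)) l (nhds (pquotMk M p))) ∧
    (∀ (ι : Type u) (l : Filter ι) (pα : ι → ProjSet M) (p : ProjSet M),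
      Filter.Tendsto (fun α => pquotMk M (pα α)) l (nhds (pquotMk M p)) →
      ∀ ξ : H, Filter.Tendsto (fun α => T (pα α).1 ξ) l (nhds (T p.1 ξ))) ∧
    (∃ D : PQuot M → H →L[ℂ] H,
      (∀ p : ProjSet M, D (pquotMk M p) = T p.1) ∧
      Function.Injective D ∧
      ∀ s : Set (PQuot M), IsOpen s ↔
        ∃ t : Set (H →L[ℂ] H), (SOT (H := H)).IsOpen t ∧ D ⁻¹' t = s) := by
  have hT : CTrace M T := ⟨hmem, hadd, hsmul, htr, hpos, hfaithful, hmod⟩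
  let D : PQuot M → H →L[ℂ] H := Quot.lift (fun p => T p.1) (by
    rintro p q ⟨v, hv, h1, h2⟩
    change T p.1 = T q.1
    rw [← h1, ← h2]
    exact htr _ (star_mem hv) _ hv)
  have hD : ∀ p : ProjSet M, D (pquotMk M p) = T p.1 := fun p => rfl
  let E : PQuot M → (H → H) := fun a ξ => D a ξ
  have hE : Continuous E := by
    apply continuous_pi
    intro ξ
    refine continuous_quot_lift (f := fun p : ProjSet M => T p.1 ξ) (fun p q hpq => ?_) ?_ |>.congr ?_
    · have h0 : pquotMk M p = pquotMk M q := Quot.sound hpq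
      exact congr(D $h0 ξ)
    · rw [continuous_iff_continuousAt]
      intro p
      refine hcont (ProjSet M) (𝓝 p) (fun q => q.1) p.1 1
        (fun q => ⟨q.2.1, proj_norm_le q.2.2.1 q.2.2.2⟩) p.2.1 ?_ ξ
      exact projSet_tendsto.1 tendsto_id
    · rintro ⟨p⟩
      rfl
  have hEind : IsInducing E := by
    rw [isInducing_iff_nhds]
    intro a
    apply le_antisymm (hE.tendsto a).le_comap
    obtain ⟨p, rfl⟩ : ∃ p, pquotMk M p = a := Quot.exists_rep a
    have h1 : ∀ b : PQuot M, pquotMk M (Quot.out b) = b := Quot.out_eq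
    have h2 := part_one M T hT hcont (comap E (𝓝 (E (pquotMk M p)))) Quot.out p ?_
    · simp only [h1] at h2
      exact h2
    · intro ξ
      have h3 := tendsto_pi_nhds.1 (tendsto_comap (f := E) (x := 𝓝 (E (pquotMk M p)))) ξ
      have h4 : ∀ b : PQuot M, E b ξ = T (Quot.out b).1 ξ := fun b => by
        conv_lhs => rw [← h1 b]
        rfl
      exact h3.congr h4
  refine ⟨fun ι l pα p h => part_one M T hT hcont l pα p h, ?_, D, hD, ?_, ?_⟩
  · intro ι l pα p h ξ
    exact tendsto_pi_nhds.1 ((hE.tendsto _).comp h) ξ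
  · intro a b hab
    obtain ⟨p, rfl⟩ : ∃ p, pquotMk M p = a := Quot.exists_rep a
    obtain ⟨q, rfl⟩ : ∃ p, pquotMk M p = b := Quot.exists_rep b
    rw [hD, hD] at hab
    obtain ⟨q', hq', hqq', z, hz, h1, h2⟩ := compare M T hT p.1 q.1 p.2 q.2
    rw [hab, sub_self, mul_zero, add_zero, sub_zero] at h1
    have hsa : star (q' - p.1) = q' - p.1 := by
      rw [star_sub, show star q' = q' from hq'.2.1, show star p.1 = p.1 from p.2.2.1]
    have hdM : q' - p.1 ∈ M := sub_mem hq'.1 p.2.1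
    have h3 : (q' - p.1) * (q' - p.1) = 0 :=
      hfaithful _ (mul_mem hdM hdM) (isPositive_of_proj (by rw [star_mul, hsa]) h2) h1
    have h4 : q' - p.1 = 0 := by
      rw [← CStarRing.star_mul_self_eq_zero_iff, hsa]
      exact h3
    rw [sub_eq_zero.1 h4] at hqq'
    have h5 : pquotMk M q = pquotMk M p := Quot.sound hqq'
    exact h5.symm
  · intro s
    rw [hEind.isOpen_iff]
    constructor
    · rintro ⟨t, ht, rfl⟩
      exact ⟨(fun a : H →L[ℂ] H => (fun ξ => a ξ : H → H)) ⁻¹' t, ⟨t, ht, rfl⟩, rfl⟩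
    · rintro ⟨_, ⟨t, ht, rfl⟩, rfl⟩
      exact ⟨t, ht, rfl⟩
end
end
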